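/- arXiv:2202.06759 — 4 statements merged into one kernel-verified Lean document; each statement's English description precedes it below -/
import Mathlib

section
/- Let ε > 0 be fixed and p > 2 be a fixed prime. Then there exist a constant C > 0 (depending only on p and ε) and n₀ ∈ ℕ such that for all n ≥ n₀, writing q := pⁿ, and for ALL integers α₁, α₂, α₃ coprime to p: if there exists (x₁,x₂,x₃) ∈ ℤ³ with p ∤ x₁x₂x₃ and q | α₁x₁²+α₂x₂²+α₃x₃², then there exists such a triple with max(|x₁|,|x₂|,|x₃|) ≤ C · q^{11/18+ε}. -/
/-- If a homomorphism `φ` from `ℤ³` to a finite group has no small nonzero element in its kernel,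
then a subgroup strictly larger than the kernel contains a short vector outside of it: otherwise
translates of a box along a shortest such vector would have too many distinct images. -/
theorem exists_mem_not_mem_ker_of_box_inter_ker {H : Type*} [AddCommGroup H] [Fintype H]
    (φ : (Fin 3 → ℤ) →+ H) (L : AddSubgroup (Fin 3 → ℤ)) (hL : φ.ker ≤ L)
    (hne : ∃ x ∈ L, φ x ≠ 0) (h : ℕ) (hh : 0 < h)
    (hmin : ∀ v, φ v = 0 → (∀ i, |v i| < h) → v = 0) :
    ∃ x ∈ L, φ x ≠ 0 ∧ ∃ X : ℕ, (∀ i, |x i| ≤ X) ∧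
      (X < h ∨ X * h ^ 2 < 2 * Fintype.card H) := by
  classical
  have hex : ∃ X : ℕ, ∃ x ∈ L, φ x ≠ 0 ∧ ∀ i, |x i| ≤ X := by
    obtain ⟨x, hx, hx0⟩ := hne
    refine ⟨∑ i, (x i).natAbs, x, hx, hx0, fun i => ?_⟩
    rw [Int.abs_eq_natAbs]
    exact_mod_cast Finset.single_le_sum (f := fun i => (x i).natAbs) (fun _ _ => Nat.zero_le _)
      (Finset.mem_univ i)
  obtain ⟨x, hx, hx0, hxX⟩ := Nat.find_spec hex
  have hsmall : ∀ Y < Nat.find hex, ¬ ∃ x ∈ L, φ x ≠ 0 ∧ ∀ i, |x i| ≤ (Y : ℤ) :=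
    fun Y hY => Nat.find_min hex hY
  generalize Nat.find hex = X at hxX hsmall
  refine ⟨x, hx, hx0, X, hxX, ?_⟩
  by_contra! hcon
  obtain ⟨hXh, hcard⟩ := hcon
  set K := X / h with hK
  have hK1 : 0 < K := Nat.div_pos hXh hh
  have hKh : K * h ≤ X := Nat.div_mul_le_self X h
  have hXK : X < (K + 1) * h := by
    rw [mul_comm]; exact Nat.lt_mul_div_succ X hh
  let z : ℕ → Fin 3 → ℤ := fun i c => ((i : ℤ) * x c) / K
  let f : Fin K × (Fin 3 → Fin h) → H := fun ib => φ (fun c => z ib.1 c + ((ib.2 c : ℕ) : ℤ))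
  have hlt : ∀ (i j : ℕ) (b b' : Fin 3 → Fin h), i < j → j < K →
      φ (fun c => z i c + ((b c : ℕ) : ℤ)) ≠ φ (fun c => z j c + ((b' c : ℕ) : ℤ)) := by
    intro i j b b' hij hjK heq
    have hd : φ ((fun c => z j c + ((b' c : ℕ) : ℤ)) - (fun c => z i c + ((b c : ℕ) : ℤ))) = 0 := by
      rw [map_sub, heq, sub_self]
    set d := ((fun c => z j c + ((b' c : ℕ) : ℤ)) - (fun c => z i c + ((b c : ℕ) : ℤ))) with hd'
    refine hsmall (X - 1) (by omega) ⟨x - d, L.sub_mem hx (hL hd), ?_, fun c => ?_⟩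
    · rw [map_sub, hd, sub_zero]; exact hx0
    have hX1 : ((X - 1 : ℕ) : ℤ) = X - 1 := by omega
    rw [hX1, Int.le_sub_one_iff]
    have hKz : (0 : ℤ) < K := by exact_mod_cast hK1
    have e1 := Int.mul_ediv_add_emod ((i : ℤ) * x c) K
    have e2 := Int.emod_nonneg ((i : ℤ) * x c) hKz.ne'
    have e3 := Int.emod_lt_of_pos ((i : ℤ) * x c) hKz
    have e4 := Int.mul_ediv_add_emod ((j : ℤ) * x c) K
    have e5 := Int.emod_nonneg ((j : ℤ) * x c) hKz.ne'
    have e6 := Int.emod_lt_of_pos ((j : ℤ) * x c) hKz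
    have hdc : d c = ((j : ℤ) * x c) / K + ((b' c : ℕ) : ℤ)
      - (((i : ℤ) * x c) / K + ((b c : ℕ) : ℤ)) := rfl
    rw [Pi.sub_apply, hdc]
    generalize ((i : ℤ) * x c) / K = zi at *
    generalize ((j : ℤ) * x c) / K = zj at *
    generalize ((i : ℤ) * x c) % K = ri at *
    generalize ((j : ℤ) * x c) % K = rj at *
    have hb : ((b c : ℕ) : ℤ) + 1 ≤ h := by exact_mod_cast (b c).2
    have hb' : ((b' c : ℕ) : ℤ) + 1 ≤ h := by exact_mod_cast (b' c).2
    have hb0 : (0 : ℤ) ≤ ((b c : ℕ) : ℤ) := by positivity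
    have hb0' : (0 : ℤ) ≤ ((b' c : ℕ) : ℤ) := by positivity
    generalize ((b c : ℕ) : ℤ) = B at *
    generalize ((b' c : ℕ) : ℤ) = B' at *
    have hxc := abs_le.1 (hxX c)
    have hij' : (i : ℤ) + 1 ≤ j := by exact_mod_cast hij
    have hjK' : (j : ℤ) < K := by exact_mod_cast hjK
    have hi0 : (0 : ℤ) ≤ i := by positivity
    have hKh' : (K : ℤ) * h ≤ X := by exact_mod_cast hKh
    have hX0 : (0 : ℤ) ≤ X := by positivity
    have key : (K : ℤ) * (x c - (zj + B' - (zi + B))) =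
        (K - (j - i)) * x c + (rj - ri) - K * (B' - B) := by linear_combination e1 - e4
    have up : ((K : ℤ) - (j - i)) * x c ≤ (K - 1) * X := by
      calc ((K : ℤ) - (j - i)) * x c ≤ (K - (j - i)) * X :=
            mul_le_mul_of_nonneg_left hxc.2 (by linarith)
        _ ≤ (K - 1) * X := mul_le_mul_of_nonneg_right (by linarith) hX0
    have lo : -((K - 1) * X) ≤ ((K : ℤ) - (j - i)) * x c := by
      calc -(((K : ℤ) - 1) * X) ≤ -((K - (j - i)) * X) :=
            neg_le_neg (mul_le_mul_of_nonneg_right (by linarith) hX0)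
        _ = (K - (j - i)) * (-X) := by ring
        _ ≤ _ := mul_le_mul_of_nonneg_left hxc.1 (by linarith)
    have hBu : (K : ℤ) * (B' - B) ≤ K * (h - 1) := mul_le_mul_of_nonneg_left (by linarith) hKz.le
    have hBl : (K : ℤ) * (B - B') ≤ K * (h - 1) := mul_le_mul_of_nonneg_left (by linarith) hKz.le
    rw [abs_lt]
    constructor
    · refine lt_of_mul_lt_mul_left (a := (K : ℤ)) ?_ hKz.le
      rw [key]; linarith
    · refine lt_of_mul_lt_mul_left (a := (K : ℤ)) ?_ hKz.le
      rw [key]; linarith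
  have hinj : Function.Injective f := by
    rintro ⟨i, b⟩ ⟨j, b'⟩ heq
    have heq' : φ (fun c => z i c + ((b c : ℕ) : ℤ)) = φ (fun c => z j c + ((b' c : ℕ) : ℤ)) := heq
    rcases lt_trichotomy (i : ℕ) j with hij | hij | hij
    · exact absurd heq' (hlt i j b b' hij j.2)
    · obtain rfl : i = j := Fin.ext hij
      have h0 := hmin ((fun c => z i c + ((b c : ℕ) : ℤ)) - (fun c => z i c + ((b' c : ℕ) : ℤ)))
        (by rw [map_sub, heq', sub_self]) (fun c => by
          have h1 := (b c).2
          have h2 := (b' c).2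
          simp only [Pi.sub_apply]
          rw [abs_lt]; constructor <;> omega)
      congr 1
      funext c
      have hc := congrFun h0 c
      simp only [Pi.sub_apply, Pi.zero_apply] at hc
      exact Fin.ext (by omega)
    · exact absurd heq'.symm (hlt j i b' b hij i.2)
  have hle := Fintype.card_le_of_injective f hinj
  simp only [Fintype.card_prod, Fintype.card_fin, Fintype.card_fun] at hle
  have h2 : X * h ^ 2 < 2 * (K * h ^ 3) := by
    have : X < 2 * K * h := by nlinarith
    calc X * h ^ 2 < 2 * K * h * h ^ 2 := by gcongr
      _ = _ := by ring
  omega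

/-- The Vandermonde product `x * y * (y - x)` dominates a perturbation of size `p ^ (2 * l)`
`p`-adically when its factors are nonzero modulo `p ^ l`. -/
theorem perturbed_vandermonde {p : ℤ} (hp : Prime p) {l j : ℕ} (hjl : j ≤ l)
    {U x y X Y Z : ℤ} (hU : ¬ p ∣ U) (hx : p ^ j ∣ x) (hy : p ^ j ∣ y)
    (hxl : ¬ p ^ l ∣ x) (hyl : ¬ p ^ l ∣ y) (hxyl : ¬ p ^ l ∣ y - x) :
    p ^ (3 * j) ∣ U * (x * y * (y - x)) + p ^ (2 * l) * (x * X + y * Y + p ^ (2 * l) * Z) ∧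
      U * (x * y * (y - x)) + p ^ (2 * l) * (x * X + y * Y + p ^ (2 * l) * Z) ≠ 0 := by
  constructor
  · refine dvd_add (Dvd.dvd.mul_left ?_ _) ?_
    · rw [show 3 * j = j + j + j by ring, pow_add, pow_add]
      exact mul_dvd_mul (mul_dvd_mul hx hy) (dvd_sub hy hx)
    · rw [show 3 * j = 2 * j + j by ring, pow_add]
      refine mul_dvd_mul (pow_dvd_pow p (by omega)) ?_
      exact dvd_add (dvd_add (hx.mul_right _) (hy.mul_right _))
        ((pow_dvd_pow p (by omega)).mul_right _)
  · intro h0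
    -- the largest power `p ^ b` dividing both `x` and `y`
    obtain ⟨b, hbx, hby, hb⟩ : ∃ b, p ^ b ∣ x ∧ p ^ b ∣ y ∧ ¬ (p ^ (b + 1) ∣ x ∧ p ^ (b + 1) ∣ y) := by
      by_contra! hcon
      have : ∀ b, p ^ b ∣ x ∧ p ^ b ∣ y := by
        intro b
        induction b with
        | zero => simp
        | succ b ih => exact hcon b ih.1 ih.2
      exact hxl (this l).1
    have hbl : b < l := by
      by_contra! hlb
      exact hxl ((pow_dvd_pow p hlb).trans hbx)
    obtain ⟨u, rfl⟩ := hbx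
    obtain ⟨v, rfl⟩ := hby
    have hpb : p ^ b ≠ 0 := pow_ne_zero _ hp.ne_zero
    have huv : ¬ (p ∣ u ∧ p ∣ v) := fun h => hb
      ⟨by rw [pow_succ]; exact mul_dvd_mul_left _ h.1, by rw [pow_succ]; exact mul_dvd_mul_left _ h.2⟩
    obtain ⟨k, rfl⟩ : ∃ k, l = b + k := ⟨l - b, by omega⟩
    have hdvd : p ^ (2 * k) ∣ U * (u * v * (v - u)) := by
      refine ⟨-(u * X + v * Y + p ^ (b + 2 * k) * Z), ?_⟩
      have h3 : p ^ (3 * b) ≠ 0 := pow_ne_zero _ hp.ne_zero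
      apply mul_left_cancel₀ h3
      have e1 : p ^ (2 * (b + k)) = p ^ b * p ^ b * p ^ (2 * k) := by ring
      have e2 : p ^ (3 * b) = p ^ b * p ^ b * p ^ b := by ring
      have e3 : p ^ (b + 2 * k) = p ^ b * p ^ (2 * k) := by ring
      rw [e1] at h0
      rw [e2, e3]
      linear_combination h0
    have hk : ∀ w, p ^ (2 * k) ∣ w → p ^ (b + k) ∣ p ^ b * w := fun w hw => by
      rw [pow_add]; exact mul_dvd_mul_left _ ((pow_dvd_pow p (by omega)).trans hw)
    by_cases hu : p ∣ u
    · have hv : ¬ p ∣ v := fun h => huv ⟨hu, h⟩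
      have hvu : ¬ p ∣ v - u := fun h => hv ((dvd_sub_left hu).1 h)
      refine hxl (hk u (hp.pow_dvd_of_dvd_mul_left (2 * k) hv ?_))
      refine hp.pow_dvd_of_dvd_mul_left (2 * k) hvu ?_
      refine hp.pow_dvd_of_dvd_mul_left (2 * k) hU ?_
      exact hdvd.trans (dvd_of_eq (by ring))
    · by_cases hv : p ∣ v
      · have hvu : ¬ p ∣ v - u := fun h => hu ((dvd_sub_right hv).1 h)
        refine hyl (hk v (hp.pow_dvd_of_dvd_mul_left (2 * k) hu ?_))
        refine hp.pow_dvd_of_dvd_mul_left (2 * k) hvu ?_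
        refine hp.pow_dvd_of_dvd_mul_left (2 * k) hU ?_
        exact hdvd.trans (dvd_of_eq (by ring))
      · refine hxyl ?_
        rw [← mul_sub]
        refine hk (v - u) (hp.pow_dvd_of_dvd_mul_left (2 * k) hu ?_)
        refine hp.pow_dvd_of_dvd_mul_left (2 * k) hv ?_
        refine hp.pow_dvd_of_dvd_mul_left (2 * k) hU ?_
        exact hdvd.trans (dvd_of_eq (by ring))

/-- The determinant of the matrix with rows `u`, `v`, `w`. -/
def tripleDet (u v w : Fin 3 → ℤ) : ℤ :=
  u 0 * (v 1 * w 2 - v 2 * w 1) - u 1 * (v 0 * w 2 - v 2 * w 0) + u 2 * (v 0 * w 1 - v 1 * w 0)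

theorem abs_tripleDet_le {u v w : Fin 3 → ℤ} {B : ℤ} (hu : ∀ i, |u i| ≤ B)
    (hv : ∀ i, |v i| ≤ B) (hw : ∀ i, |w i| ≤ B) : |tripleDet u v w| ≤ 6 * B ^ 3 := by
  have hB : 0 ≤ B := (abs_nonneg _).trans (hu 0)
  have h3 : ∀ i j k, |u i * v j * w k| ≤ B ^ 3 := fun i j k => by
    rw [abs_mul, abs_mul, pow_succ, sq]
    exact mul_le_mul (mul_le_mul (hu i) (hv j) (abs_nonneg _) hB) (hw k) (abs_nonneg _)
      (mul_nonneg hB hB)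
  have h012 := abs_le.1 (h3 0 1 2)
  have h021 := abs_le.1 (h3 0 2 1)
  have h102 := abs_le.1 (h3 1 0 2)
  have h120 := abs_le.1 (h3 1 2 0)
  have h201 := abs_le.1 (h3 2 0 1)
  have h210 := abs_le.1 (h3 2 1 0)
  rw [abs_le, tripleDet]
  constructor <;> linarith

/-- A point of the conic `D * y ^ 2 + z * x = 0` modulo `p ^ (2 * l)` whose first coordinate is
invertible is a multiple of `(1, τ, -D * τ ^ 2)`. -/
theorem exists_param_of_conic {p : ℤ} (hp : Prime p) {l : ℕ} {D t M G C : ℤ} (hM : ¬ p ∣ M)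
    (hG : p ^ l ∣ G - t * M) (hQ : p ^ (2 * l) ∣ D * G ^ 2 + C * M) :
    ∃ τ g c, p ^ l ∣ τ - t ∧ G = τ * M + p ^ (2 * l) * g ∧
      C = -D * τ ^ 2 * M + p ^ (2 * l) * c := by
  have hcop : IsCoprime M (p ^ (2 * l)) :=
    ((Prime.coprime_iff_not_dvd hp).2 hM).symm.pow_right
  obtain ⟨r, s, hrs⟩ := hcop
  have h1 : G = (G * r) * M + p ^ (2 * l) * (G * s) := by linear_combination -G * hrs
  have h2 : p ^ (2 * l) ∣ M * (C + D * (G * r) ^ 2 * M) := by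
    obtain ⟨k, hk⟩ := hQ
    refine ⟨k - D * (G * s) * (2 * G - p ^ (2 * l) * (G * s)), ?_⟩
    linear_combination hk - D * (G + G * r * M - p ^ (2 * l) * (G * s)) * h1
  obtain ⟨c, hc⟩ := hp.pow_dvd_of_dvd_mul_left _ hM h2
  refine ⟨G * r, G * s, c, ?_, h1, by linear_combination hc⟩
  refine hp.pow_dvd_of_dvd_mul_left _ hM ?_
  have h3 : M * (G * r - t) = (G - t * M) - p ^ (2 * l) * (G * s) := by linear_combination -h1
  rw [h3]
  exact dvd_sub hG ((pow_dvd_pow p (by omega)).mul_right _)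

/-- Three points of a conic modulo `p ^ (2 * l)` whose parameters agree modulo `p ^ j` but are
pairwise distinct modulo `p ^ l` have a nonzero determinant divisible by `p ^ (3 * j)`. -/
theorem tripleDet_of_conic {p : ℤ} (hp : Prime p) {l j : ℕ} (hjl : j ≤ l) {D : ℤ} (hD : ¬ p ∣ D)
    {M G C t : Fin 3 → ℤ} (hM : ∀ i, ¬ p ∣ M i) (hG : ∀ i, p ^ l ∣ G i - t i * M i)
    (hQ : ∀ i, p ^ (2 * l) ∣ D * G i ^ 2 + C i * M i)
    (htj : ∀ i k, p ^ j ∣ t i - t k) (htl : ∀ i k, i ≠ k → ¬ p ^ l ∣ t i - t k) :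
    p ^ (3 * j) ∣ tripleDet M G C ∧ tripleDet M G C ≠ 0 := by
  choose τ g c hτ hGτ hCτ using fun i => exists_param_of_conic hp (hM i) (hG i) (hQ i)
  have hτj : ∀ i k, p ^ j ∣ τ i - τ k := fun i k => by
    have h : τ i - τ k = (τ i - t i) - (τ k - t k) + (t i - t k) := by ring
    rw [h]
    exact dvd_add (dvd_sub ((pow_dvd_pow p hjl).trans (hτ i)) ((pow_dvd_pow p hjl).trans (hτ k)))
      (htj i k)
  have hτl : ∀ i k, i ≠ k → ¬ p ^ l ∣ τ i - τ k := fun i k hik hdvd => by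
    apply htl i k hik
    have h : t i - t k = (τ i - τ k) - (τ i - t i) + (τ k - t k) := by ring
    rw [h]
    exact dvd_add (dvd_sub hdvd (hτ i)) (hτ k)
  have hU : ¬ p ∣ -D * M 0 ^ 2 * M 1 * M 2 := by
    simp only [hp.dvd_mul, dvd_neg, not_or]
    exact ⟨⟨⟨hD, fun h => hM 0 (hp.dvd_of_dvd_pow h)⟩, hM 1⟩, hM 2⟩
  obtain ⟨X, Y, Z, hXYZ⟩ : ∃ X Y Z : ℤ, M 0 * tripleDet M G C =
      (-D * M 0 ^ 2 * M 1 * M 2) * ((τ 1 - τ 0) * (τ 2 - τ 0) * ((τ 2 - τ 0) - (τ 1 - τ 0))) +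
      p ^ (2 * l) * ((τ 1 - τ 0) * X + (τ 2 - τ 0) * Y + p ^ (2 * l) * Z) := by
    refine ⟨M 0 * M 1 * (M 0 * c 2 - M 2 * c 0)
        + (M 0 * g 2 - M 2 * g 0) * (D * M 0 * M 1 * (τ 1 + τ 0)),
      -(M 0 * g 1 - M 1 * g 0) * (D * M 0 * M 2 * (τ 2 + τ 0))
        - M 0 * M 2 * (M 0 * c 1 - M 1 * c 0),
      (M 0 * g 1 - M 1 * g 0) * (M 0 * c 2 - M 2 * c 0)
        - (M 0 * g 2 - M 2 * g 0) * (M 0 * c 1 - M 1 * c 0), ?_⟩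
    rw [tripleDet, hGτ 0, hGτ 1, hGτ 2, hCτ 0, hCτ 1, hCτ 2]
    ring
  have key := perturbed_vandermonde hp hjl (X := X) (Y := Y) (Z := Z) hU (hτj 1 0) (hτj 2 0)
    (hτl 1 0 (by decide)) (hτl 2 0 (by decide))
    (by rw [sub_sub_sub_cancel_right]; exact hτl 2 1 (by decide))
  rw [← hXYZ] at key
  exact ⟨hp.pow_dvd_of_dvd_mul_left _ (hM 0) key.1, right_ne_zero_of_mul key.2⟩

/-- A set of naturals below `A * B * K` in which each class modulo `A` meets at most two classes
modulo `A * B` has at most `2 * A * K` elements. -/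
theorem card_le_of_forall_three {A B K : ℕ} {S : Finset ℕ} (hA : 0 < A)
    (hB : 0 < B) (hS : S ⊆ Finset.range (A * B * K))
    (h3 : ∀ a ∈ S, ∀ b ∈ S, ∀ c ∈ S, a ≡ b [MOD A] → a ≡ c [MOD A] →
      a ≡ b [MOD A * B] ∨ a ≡ c [MOD A * B] ∨ b ≡ c [MOD A * B]) :
    S.card ≤ 2 * A * K := by
  classical
  have hAB : 0 < A * B := Nat.mul_pos hA hB
  set O := S.image (· % (A * B)) with hO
  have hO2 : O.card ≤ 2 * A := by
    have hle : O.card ≤ 2 * (O.image (· % A)).card := by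
      refine Finset.card_le_mul_card_image O 2 fun r _ => ?_
      by_contra! hlt
      obtain ⟨a, b, c, ha, hb, hc, hab, hac, hbc⟩ := Finset.two_lt_card_iff.1 hlt
      simp only [Finset.mem_filter, hO, Finset.mem_image] at ha hb hc
      obtain ⟨⟨a, haS, rfl⟩, ha⟩ := ha
      obtain ⟨⟨b, hbS, rfl⟩, hb⟩ := hb
      obtain ⟨⟨c, hcS, rfl⟩, hc⟩ := hc
      rw [Nat.mod_mul_right_mod] at ha hb hc
      rcases h3 a haS b hbS c hcS (ha.trans hb.symm) (ha.trans hc.symm) with h | h | h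
      exacts [hab h, hac h, hbc h]
    have hA' : (O.image (· % A)).card ≤ A := by
      refine (Finset.card_le_card (t := Finset.range A) fun r hr => ?_).trans
        (Finset.card_range A).le
      obtain ⟨s, -, rfl⟩ := Finset.mem_image.1 hr
      exact Finset.mem_range.2 (Nat.mod_lt _ hA)
    omega
  have hSO : S.card ≤ (O ×ˢ Finset.range K).card := by
    refine Finset.card_le_card_of_injOn (fun s => (s % (A * B), s / (A * B))) (fun s hs => ?_)
      fun s _ s' _ h => ?_
    · simp only [Finset.coe_product, Set.mem_prod, Finset.mem_coe, Finset.mem_range]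
      exact ⟨Finset.mem_image_of_mem _ hs,
        Nat.div_lt_of_lt_mul (Finset.mem_range.1 (hS hs))⟩
    · simp only [Prod.mk.injEq] at h
      rw [← Nat.mod_add_div s (A * B), ← Nat.mod_add_div s' (A * B), h.1, h.2]
  rw [Finset.card_product, Finset.card_range] at hSO
  exact hSO.trans (Nat.mul_le_mul_right K hO2)

theorem exists_eq_smul_primitive {p : ℤ} {m : ℕ} {v : Fin 3 → ℤ} (hv : v ≠ 0)
    (hvm : ∀ i, |v i| < p ^ m) :
    ∃ k < m, ∃ w : Fin 3 → ℤ, v = p ^ k • w ∧ ¬ ∀ i, p ∣ w i := by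
  classical
  have hex : ∃ K, ¬ ∀ i, p ^ K ∣ v i :=
    ⟨m, fun h => hv (funext fun i => Int.eq_zero_of_abs_lt_dvd (h i) (hvm i))⟩
  have hKm : Nat.find hex ≤ m := Nat.find_min' hex
    fun h => hv (funext fun i => Int.eq_zero_of_abs_lt_dvd (h i) (hvm i))
  have hspec := Nat.find_spec hex
  have hpred : ∀ k < Nat.find hex, ∀ i, p ^ k ∣ v i :=
    fun k hk => not_not.1 (Nat.find_min hex hk)
  generalize Nat.find hex = K at *
  obtain _ | k := K
  · simp at hspec
  choose w hw using hpred k (Nat.lt_succ_self k)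
  refine ⟨k, hKm, w, funext hw, fun h => hspec fun i => ?_⟩
  rw [hw i, pow_succ]
  exact mul_dvd_mul_left _ (h i)

/-- Some parameter `t` of the conic `D * G ^ 2 + C * M = 0` has the property that its tangent
lattice contains no small nonzero vector on which `M` vanishes modulo `p`. -/
theorem exists_param_avoiding {p : ℕ} (hp : p.Prime) {D κ : ℤ} (hD : ¬ (p : ℤ) ∣ D)
    (hκ : ¬ (p : ℤ) ∣ κ) (M G C : (Fin 3 → ℤ) →+ ℤ)
    (hdet : ∀ w : Fin 3 → Fin 3 → ℤ, tripleDet (fun i => M (w i)) (fun i => G (w i))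
      (fun i => C (w i)) = κ * tripleDet (w 0) (w 1) (w 2))
    (hprim : ∀ v, (p : ℤ) ∣ M v → (p : ℤ) ∣ G v → (p : ℤ) ∣ C v → ∀ i, (p : ℤ) ∣ v i)
    {n m e : ℕ} (he : 1 ≤ e) (hnm : 2 * m ≤ n + 1) (hcount : m * (2 * p ^ (m - e)) < p ^ (m - 1)) :
    ∃ t : ℤ, (p : ℤ) ∣ t ∧ ∀ v, (p : ℤ) ∣ M v → (p : ℤ) ^ m ∣ G v - t * M v →
      (p : ℤ) ^ n ∣ C v + 2 * D * t * G v - D * t ^ 2 * M v →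
      (∀ i, |v i| < (p : ℤ) ^ (m - e)) → v = 0 := by
  classical
  have hpz : Prime (p : ℤ) := Nat.prime_iff_prime_int.1 hp
  let Bad : ℕ → ℕ → Prop := fun l s => ∃ w, ¬ (p : ℤ) ∣ M w ∧
    (p : ℤ) ^ l ∣ G w - (p * s : ℤ) * M w ∧ (p : ℤ) ^ (2 * l) ∣ D * G w ^ 2 + C w * M w ∧
    ∀ i, |w i| < (p : ℤ) ^ (l - e)
  let S : ℕ → Finset ℕ := fun l => (Finset.range (p ^ (m - 1))).filter (Bad l)
  have hS : ∀ l ∈ Finset.range m, (S l).card ≤ 2 * p ^ (m - e) := by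
    intro l hl
    rw [Finset.mem_range] at hl
    rcases le_or_gt l e with hle | hel
    · have : S l = ∅ := by
        refine Finset.filter_eq_empty_iff.2 fun s _ => ?_
        rintro ⟨w, hMw, -, -, hw⟩
        obtain rfl : w = 0 := funext fun i => by
          have := hw i
          rw [Nat.sub_eq_zero_of_le hle, pow_zero, Int.abs_lt_one_iff] at this
          exact this
        simp at hMw
      simp [this]
    have hpow : p ^ (l - e) * p ^ (e - 1) = p ^ (l - 1) := by
      rw [← pow_add]; congr 1; omega
    have hpow' : p ^ (l - 1) * p ^ (m - l) = p ^ (m - 1) := by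
      rw [← pow_add]; congr 1; omega
    have hpow2 : 2 * p ^ (l - e) * p ^ (m - l) = 2 * p ^ (m - e) := by
      rw [mul_assoc, ← pow_add]; congr 2; omega
    rw [← hpow2]
    refine card_le_of_forall_three (B := p ^ (e - 1)) (pow_pos hp.pos _) (pow_pos hp.pos _)
      ?_ ?_
    · rw [hpow, hpow']; exact Finset.filter_subset _ _
    rw [hpow]
    intro a ha b hb c hc hab hac
    by_contra! hcon
    obtain ⟨nab, nac, nbc⟩ := hcon
    have hmem : ∀ i : Fin 3, Bad l (![a, b, c] i) := by
      intro i
      fin_cases i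
      exacts [(Finset.mem_filter.1 ha).2, (Finset.mem_filter.1 hb).2, (Finset.mem_filter.1 hc).2]
    choose w hMw hGw hQw hw using hmem
    have hmul : ∀ (r x y : ℕ), (p : ℤ) ^ (r + 1) ∣ (p * x : ℤ) - p * y ↔ y ≡ x [MOD p ^ r] := by
      intro r x y
      rw [Nat.modEq_iff_dvd, ← mul_sub, pow_succ', mul_dvd_mul_iff_left hpz.ne_zero]
      push_cast; rfl
    have hl1 : l - 1 + 1 = l := by omega
    have hall : ∀ i k : Fin 3, ![a, b, c] k ≡ ![a, b, c] i [MOD p ^ (l - e)] := by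
      have : ∀ i : Fin 3, a ≡ ![a, b, c] i [MOD p ^ (l - e)] := fun i => by
        fin_cases i
        exacts [rfl, hab, hac]
      exact fun i k => (this k).symm.trans (this i)
    have hnone : ∀ i k : Fin 3, i ≠ k → ¬ ![a, b, c] k ≡ ![a, b, c] i [MOD p ^ (l - 1)] := by
      intro i k hik
      fin_cases i <;> fin_cases k
      exacts [absurd rfl hik, fun h => nab h.symm, fun h => nac h.symm, nab, absurd rfl hik,
        fun h => nbc h.symm, nac, nbc, absurd rfl hik]
    obtain ⟨h1, h2⟩ := tripleDet_of_conic hpz (l := l) (j := l - e + 1) (by omega) hD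
      (M := fun i => M (w i)) (G := fun i => G (w i)) (C := fun i => C (w i))
      (t := fun i => p * (![a, b, c] i : ℕ)) hMw hGw hQw
      (fun i k => (hmul _ _ _).2 (hall i k))
      (fun i k hik => by
        have := hnone i k hik
        rwa [← hmul, hl1] at this)
    rw [hdet w] at h1 h2
    have h3 := Int.le_of_dvd (abs_pos.2 (right_ne_zero_of_mul h2))
      ((dvd_abs _ _).2 (hpz.pow_dvd_of_dvd_mul_left _ hκ h1))
    have h4 := h3.trans (abs_tripleDet_le (fun i => (hw 0 i).le) (fun i => (hw 1 i).le)
      (fun i => (hw 2 i).le))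
    have h5 : (p : ℤ) ^ (3 * (l - e + 1)) = p ^ 3 * (p ^ (l - e)) ^ 3 := by ring
    rw [h5] at h4
    have h6 : (0 : ℤ) < (p ^ (l - e)) ^ 3 := by
      have := hp.pos
      positivity
    have h7 : (2 : ℤ) ^ 3 ≤ p ^ 3 := by
      have : (2 : ℤ) ≤ p := by exact_mod_cast hp.two_le
      gcongr
    nlinarith
  have hcardU : ((Finset.range m).biUnion S).card < (Finset.range (p ^ (m - 1))).card := by
    rw [Finset.card_range]
    refine (Finset.card_biUnion_le_card_mul _ _ _ hS).trans_lt ?_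
    rwa [Finset.card_range]
  obtain ⟨s, hs, hsU⟩ := Finset.exists_mem_notMem_of_card_lt_card hcardU
  refine ⟨p * s, dvd_mul_right _ _, fun v hMv hGv hCv hv => ?_⟩
  by_contra hv0
  obtain ⟨k, hkm, w, rfl, hw⟩ := exists_eq_smul_primitive hv0 fun i => (hv i).trans_le
    (pow_le_pow_right₀ (by exact_mod_cast hp.one_le) (Nat.sub_le m e))
  simp only [map_zsmul, smul_eq_mul, Pi.smul_apply] at hMv hGv hCv hv
  obtain ⟨t, ht⟩ : ∃ t : ℤ, t = p * s := ⟨_, rfl⟩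
  rw [← ht] at hGv hCv
  have hpk : (p : ℤ) ^ k ≠ 0 := pow_ne_zero _ hpz.ne_zero
  have hR : (p : ℤ) ^ (m - k) ∣ G w - t * M w := by
    rw [← mul_dvd_mul_iff_left hpk, ← pow_add, Nat.add_sub_cancel' hkm.le]
    exact hGv.trans (dvd_of_eq (by ring))
  have hP : (p : ℤ) ^ (n - k) ∣ C w + 2 * D * t * G w - D * t ^ 2 * M w := by
    rw [← mul_dvd_mul_iff_left hpk, ← pow_add, Nat.add_sub_cancel' (by omega)]
    exact hCv.trans (dvd_of_eq (by ring))
  have hMw : ¬ (p : ℤ) ∣ M w := by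
    intro hM
    have hG : (p : ℤ) ∣ G w := by
      have := (dvd_pow_self (p : ℤ) (by omega : m - k ≠ 0)).trans hR
      exact (dvd_sub_left (hM.mul_left t)).1 this
    have hC : (p : ℤ) ∣ C w := by
      have := (dvd_pow_self (p : ℤ) (by omega : n - k ≠ 0)).trans hP
      rw [add_sub_assoc] at this
      exact (dvd_add_left (dvd_sub (hG.mul_left _) (hM.mul_left _))).1 this
    exact hw (hprim w hM hG hC)
  have hk : k ≠ 0 := by
    rintro rfl
    exact hMw (by simpa using hMv)
  refine hsU (Finset.mem_biUnion.2 ⟨m - k, Finset.mem_range.2 (by omega),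
    Finset.mem_filter.2 ⟨hs, w, hMw, by rwa [← ht], ?_, fun i => ?_⟩⟩)
  · have hid : D * G w ^ 2 + C w * M w = D * (G w - t * M w) ^ 2 +
        M w * (C w + 2 * D * t * G w - D * t ^ 2 * M w) := by ring
    rw [hid]
    refine dvd_add (Dvd.dvd.mul_left ?_ _) (Dvd.dvd.mul_left ?_ _)
    · rw [mul_comm, pow_mul]
      exact pow_dvd_pow_of_dvd hR 2
    · exact (pow_dvd_pow _ (by omega)).trans hP
  · have h1 := hv i
    rw [abs_mul, abs_of_nonneg (by positivity : (0 : ℤ) ≤ (p : ℤ) ^ k)] at h1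
    refine lt_of_mul_lt_mul_left (h1.trans_le ?_) (by positivity : (0 : ℤ) ≤ (p : ℤ) ^ k)
    rw [← pow_add]
    exact pow_le_pow_right₀ (by exact_mod_cast hp.one_le) (by omega)

/-- The linear form with coefficients `a`, `b`, `c`. -/
def linearForm (a b c : ℤ) : (Fin 3 → ℤ) →+ ℤ where
  toFun v := a * v 0 + b * v 1 + c * v 2
  map_zero' := by simp
  map_add' u v := by simp only [Pi.add_apply]; ring

theorem linearForm_apply (a b c : ℤ) (v : Fin 3 → ℤ) :
    linearForm a b c v = a * v 0 + b * v 1 + c * v 2 := rfl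

/-- A diagonal ternary congruence modulo `p ^ n` with a unit solution has one whose size is bounded
explicitly in terms of a parameter `e` with `2 * m < p ^ (e - 1)`, where `m` is about `n / 2`. -/
theorem exists_unit_solution_le {p : ℕ} (hp : p.Prime) (hp2 : 2 < p) {n m e : ℕ}
    (he : 1 ≤ e) (hem : e ≤ m) (hmn : m ≤ n) (hnm : 2 * m ≤ n + 1) (hn : n ≤ 2 * m)
    (hcount : m * (2 * p ^ (m - e)) < p ^ (m - 1))
    {α₁ α₂ α₃ a₁ a₂ a₃ : ℤ} (hα₁ : ¬ (p : ℤ) ∣ α₁) (hα₂ : ¬ (p : ℤ) ∣ α₂) (hα₃ : ¬ (p : ℤ) ∣ α₃)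
    (ha : ¬ (p : ℤ) ∣ a₁ * a₂ * a₃)
    (hQ : (p : ℤ) ^ n ∣ α₁ * a₁ ^ 2 + α₂ * a₂ ^ 2 + α₃ * a₃ ^ 2) :
    ∃ x : Fin 3 → ℤ, ¬ (p : ℤ) ∣ x 0 * x 1 * x 2 ∧
      (p : ℤ) ^ n ∣ α₁ * x 0 ^ 2 + α₂ * x 1 ^ 2 + α₃ * x 2 ^ 2 ∧
      ∀ i, |x i| ≤ 2 * (p : ℤ) ^ (n - m + 1 + 2 * e) := by
  have hpz : Prime (p : ℤ) := Nat.prime_iff_prime_int.1 hp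
  have : Fact p.Prime := ⟨hp⟩
  have h2 : ¬ (p : ℤ) ∣ 2 := fun h => by
    have := Int.le_of_dvd (by norm_num) h
    omega
  simp only [hpz.dvd_mul, not_or] at ha
  obtain ⟨⟨ha₁, ha₂⟩, ha₃⟩ := ha
  have hQp : (p : ℤ) ∣ α₁ * a₁ ^ 2 + α₂ * a₂ ^ 2 + α₃ * a₃ ^ 2 :=
    (dvd_pow_self _ (by omega)).trans hQ
  set E := α₁ * a₁ ^ 2 + α₂ * a₂ ^ 2 with hE
  have hEp : ¬ (p : ℤ) ∣ E := fun h => by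
    have := (dvd_add_right h).1 hQp
    rcases hpz.dvd_or_dvd this with h | h
    exacts [hα₃ h, ha₃ (hpz.dvd_of_dvd_pow h)]
  set D := α₁ * α₂ with hDdef
  have hD : ¬ (p : ℤ) ∣ D := fun h => (hpz.dvd_or_dvd h).elim hα₁ hα₂
  set M := linearForm (α₁ * a₁) (α₂ * a₂) (-(α₃ * a₃)) with hM
  set G := linearForm a₂ (-a₁) 0 with hG
  set C := linearForm (α₁ * a₁) (α₂ * a₂) (α₃ * a₃) with hC
  have hκ : ¬ (p : ℤ) ∣ -2 * (α₃ * a₃) * E := by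
    simp only [hpz.dvd_mul, dvd_neg, not_or]
    exact ⟨⟨h2, hα₃, ha₃⟩, hEp⟩
  have hv₃ : ∀ v, C v - M v = 2 * (α₃ * a₃) * v 2 := fun v => by
    simp only [hC, hM, linearForm_apply]; ring
  have hv₁ : ∀ v, 2 * E * v 0 = a₁ * (C v + M v) + 2 * α₂ * a₂ * G v := fun v => by
    simp only [hC, hM, hG, hE, linearForm_apply]; ring
  have hv₂ : ∀ v, 2 * E * v 1 = a₂ * (C v + M v) - 2 * α₁ * a₁ * G v := fun v => by
    simp only [hC, hM, hG, hE, linearForm_apply]; ring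
  have h2E : ¬ (p : ℤ) ∣ 2 * E := fun h => (hpz.dvd_or_dvd h).elim h2 hEp
  have hprim : ∀ v, (p : ℤ) ∣ M v → (p : ℤ) ∣ G v → (p : ℤ) ∣ C v → ∀ i, (p : ℤ) ∣ v i := by
    intro v hMv hGv hCv i
    fin_cases i
    · refine (hpz.dvd_or_dvd (a := 2 * E) ?_).resolve_left h2E
      change _ ∣ 2 * E * v 0
      rw [hv₁]
      exact dvd_add ((dvd_add hCv hMv).mul_left _) (hGv.mul_left _)
    · refine (hpz.dvd_or_dvd (a := 2 * E) ?_).resolve_left h2E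
      change _ ∣ 2 * E * v 1
      rw [hv₂]
      exact dvd_sub ((dvd_add hCv hMv).mul_left _) (hGv.mul_left _)
    · refine (hpz.dvd_or_dvd (a := 2 * (α₃ * a₃)) ?_).resolve_left ?_
      · change _ ∣ 2 * (α₃ * a₃) * v 2
        rw [← hv₃]
        exact dvd_sub hCv hMv
      · simp only [hpz.dvd_mul, not_or]
        exact ⟨h2, hα₃, ha₃⟩
  obtain ⟨t, hpt, ht⟩ := exists_param_avoiding hp hD hκ M G C (fun w => by
    simp only [tripleDet, hC, hM, hG, hE, linearForm_apply]; ring) hprim he hnm hcount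
  let φ₁ : (Fin 3 → ℤ) →+ ZMod (p ^ n) × ZMod (p ^ m) :=
    ((Int.castAddHom _).comp (C + (2 * D * t) • G - (D * t ^ 2) • M)).prod
      ((Int.castAddHom _).comp (G - t • M))
  let φ : (Fin 3 → ℤ) →+ (ZMod (p ^ n) × ZMod (p ^ m)) × ZMod p :=
    φ₁.prod ((Int.castAddHom _).comp M)
  have hφ₁ : ∀ v, φ₁ v = 0 ↔ (p : ℤ) ^ n ∣ C v + 2 * D * t * G v - D * t ^ 2 * M v ∧
      (p : ℤ) ^ m ∣ G v - t * M v := fun v => by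
    rw [Prod.ext_iff]
    refine and_congr ?_ ?_
    · rw [show (p : ℤ) ^ n = ((p ^ n : ℕ) : ℤ) by push_cast; rfl, ← ZMod.intCast_zmod_eq_zero_iff_dvd]
      rfl
    · rw [show (p : ℤ) ^ m = ((p ^ m : ℕ) : ℤ) by push_cast; rfl, ← ZMod.intCast_zmod_eq_zero_iff_dvd]
      rfl
  have hφ : ∀ v, φ v = 0 ↔ φ₁ v = 0 ∧ (p : ℤ) ∣ M v := fun v => by
    rw [Prod.ext_iff, ← ZMod.intCast_zmod_eq_zero_iff_dvd]
    rfl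
  have hne : ∃ x ∈ φ₁.ker, φ x ≠ 0 := by
    let x : Fin 3 → ℤ := ![α₃ * a₃ * (a₁ * (1 - D * t ^ 2) + 2 * α₂ * a₂ * t),
      α₃ * a₃ * (a₂ * (1 - D * t ^ 2) - 2 * α₁ * a₁ * t), -E * (1 + D * t ^ 2)]
    have hx0 : x 0 = α₃ * a₃ * (a₁ * (1 - D * t ^ 2) + 2 * α₂ * a₂ * t) := rfl
    have hx1 : x 1 = α₃ * a₃ * (a₂ * (1 - D * t ^ 2) - 2 * α₁ * a₁ * t) := rfl
    have hx2 : x 2 = -E * (1 + D * t ^ 2) := rfl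
    have hMx : M x = 2 * (α₃ * a₃) * E := by
      simp only [hM, linearForm_apply, hx0, hx1, hx2, hE, hDdef]; ring
    have hGx : G x = t * (2 * (α₃ * a₃) * E) := by
      simp only [hG, linearForm_apply, hx0, hx1, hx2, hE, hDdef]; ring
    have hCx : C x = -D * t ^ 2 * (2 * (α₃ * a₃) * E) := by
      simp only [hC, linearForm_apply, hx0, hx1, hx2, hE, hDdef]; ring
    refine ⟨x, (hφ₁ x).2 ⟨?_, ?_⟩, fun h => hκ ?_⟩
    · rw [hMx, hGx, hCx]; exact ⟨0, by ring⟩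
    · rw [hMx, hGx]; exact ⟨0, by ring⟩
    · have := ((hφ x).1 h).2
      rw [hMx] at this
      rw [neg_mul, neg_mul, dvd_neg]
      exact this
  obtain ⟨x, hxL, hx0, X, hxX, hX⟩ := exists_mem_not_mem_ker_of_box_inter_ker φ φ₁.ker
    (fun v hv => ((hφ v).1 hv).1) hne (p ^ (m - e)) (pow_pos hp.pos _) (fun v hv hvs => by
      obtain ⟨hv1, hMv⟩ := (hφ v).1 hv
      obtain ⟨hCv, hGv⟩ := (hφ₁ v).1 hv1
      exact ht v hMv hGv hCv (by exact_mod_cast hvs))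
  obtain ⟨hCx, hGx⟩ := (hφ₁ x).1 hxL
  have hMx : ¬ (p : ℤ) ∣ M x := fun h => hx0 ((hφ x).2 ⟨hxL, h⟩)
  refine ⟨x, ?_, ?_, fun i => (hxX i).trans ?_⟩
  · have hGp : (p : ℤ) ∣ G x := by
      have := (dvd_pow_self (p : ℤ) (by omega : m ≠ 0)).trans hGx
      exact (dvd_sub_left (hpt.mul_right _)).1 this
    have hCp : (p : ℤ) ∣ C x := by
      have := (dvd_pow_self (p : ℤ) (by omega : n ≠ 0)).trans hCx
      rw [add_sub_assoc] at this
      exact (dvd_add_left (dvd_sub (hGp.mul_left _)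
        (((hpt.pow two_ne_zero).mul_left _).mul_right _))).1 this
    simp only [hpz.dvd_mul, not_or]
    refine ⟨⟨fun h => ?_, fun h => ?_⟩, fun h => ?_⟩
    · have h1 := hv₁ x ▸ h.mul_left (2 * E)
      have h2 := (dvd_add_left (hGp.mul_left _)).1 h1
      exact hMx ((dvd_add_right hCp).1 ((hpz.dvd_or_dvd h2).resolve_left ha₁))
    · have h1 := hv₂ x ▸ h.mul_left (2 * E)
      have h2 := (dvd_sub_left (hGp.mul_left _)).1 h1
      exact hMx ((dvd_add_right hCp).1 ((hpz.dvd_or_dvd h2).resolve_left ha₂))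
    · have h1 := hv₃ x ▸ h.mul_left (2 * (α₃ * a₃))
      exact hMx ((dvd_sub_right hCp).1 h1)
  · have hconic : (p : ℤ) ^ n ∣ D * G x ^ 2 + C x * M x := by
      have hid : D * G x ^ 2 + C x * M x = D * (G x - t * M x) ^ 2 +
          M x * (C x + 2 * D * t * G x - D * t ^ 2 * M x) := by ring
      rw [hid]
      refine dvd_add (Dvd.dvd.mul_left ?_ _) (hCx.mul_left _)
      refine (pow_dvd_pow _ hn).trans ?_
      rw [mul_comm, pow_mul]
      exact pow_dvd_pow_of_dvd hGx 2
    refine hpz.pow_dvd_of_dvd_mul_left n (a := α₃ * a₃ ^ 2) ?_ ?_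
    · simp only [hpz.dvd_mul, not_or]
      exact ⟨hα₃, fun h => ha₃ (hpz.dvd_of_dvd_pow h)⟩
    · have hid : α₃ * a₃ ^ 2 * (α₁ * x 0 ^ 2 + α₂ * x 1 ^ 2 + α₃ * x 2 ^ 2) =
          (E + α₃ * a₃ ^ 2) * (α₁ * x 0 ^ 2 + α₂ * x 1 ^ 2) - (D * G x ^ 2 + C x * M x) := by
        simp only [hC, hM, hG, hE, hDdef, linearForm_apply]; ring
      rw [hid]
      exact dvd_sub (hQ.mul_right _) hconic
  · suffices X ≤ 2 * p ^ (n - m + 1 + 2 * e) by exact_mod_cast this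
    rcases hX with hX | hX
    · have : p ^ (m - e) ≤ p ^ (n - m + 1 + 2 * e) := Nat.pow_le_pow_right hp.pos (by omega)
      omega
    · simp only [Fintype.card_prod, ZMod.card] at hX
      refine le_of_mul_le_mul_right (hX.le.trans (le_of_eq ?_))
        (pow_pos (pow_pos hp.pos (m - e)) 2)
      rw [← pow_mul, mul_assoc 2, ← pow_add, ← pow_add, ← pow_succ]
      congr 2
      omega

/-- For fixed `p`, for all large `n`, uniformly in the coefficients
`α₁, α₂, α₃` coprime to `p`: whenever the congruence
`α₁x₁² + α₂x₂² + α₃x₃² ≡ 0 (mod pⁿ)` has a solution with all coordinates coprime to `p`,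
it has such a solution of size `≤ C · (pⁿ)^{11/18+ε}`. -/
theorem small_unit_solution_uniform_coefficients
    (ε : ℝ) (hε : 0 < ε) (p : ℕ) (hp : p.Prime) (hp2 : 2 < p) :
    ∃ C : ℝ, 0 < C ∧ ∃ n₀ : ℕ, ∀ n : ℕ, n₀ ≤ n →
      ∀ α₁ α₂ α₃ : ℤ, ¬ (p : ℤ) ∣ α₁ → ¬ (p : ℤ) ∣ α₂ → ¬ (p : ℤ) ∣ α₃ →
      ((∃ x₁ x₂ x₃ : ℤ, ¬ (p : ℤ) ∣ x₁ * x₂ * x₃ ∧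
          (p : ℤ) ^ n ∣ α₁ * x₁ ^ 2 + α₂ * x₂ ^ 2 + α₃ * x₃ ^ 2) →
        ∃ x₁ x₂ x₃ : ℤ, ¬ (p : ℤ) ∣ x₁ * x₂ * x₃ ∧
          (p : ℤ) ^ n ∣ α₁ * x₁ ^ 2 + α₂ * x₂ ^ 2 + α₃ * x₃ ^ 2 ∧
          ((max (max |x₁| |x₂|) |x₃| : ℤ) : ℝ) ≤ C * ((p : ℝ) ^ n) ^ ((11 : ℝ) / 18 + ε)) := by
  have hp0 : (0 : ℝ) < p := by exact_mod_cast hp.pos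
  refine ⟨2 * p, by positivity, 126, fun n hn α₁ α₂ α₃ hα₁ hα₂ hα₃ => ?_⟩
  rintro ⟨a₁, a₂, a₃, ha, hQ⟩
  obtain ⟨e, he⟩ : ∃ e, e = n / 18 := ⟨_, rfl⟩
  obtain ⟨m, hm⟩ : ∃ m, m = (n + 1) / 2 := ⟨_, rfl⟩
  have hcount : m * (2 * p ^ (m - e)) < p ^ (m - 1) := by
    have hpow : p ^ (m - 1) = p ^ (e - 1) * p ^ (m - e) := by
      rw [← pow_add]; congr 1; omega
    have h3 : ∀ k ≥ 6, 18 * k + 36 < 3 ^ k := by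
      intro k hk
      induction k, hk using Nat.le_induction with
      | base => norm_num
      | succ k hk ih => rw [pow_succ]; omega
    have h4 : 3 ^ (e - 1) ≤ p ^ (e - 1) := Nat.pow_le_pow_left hp2 _
    have h5 := h3 (e - 1) (by omega)
    rw [hpow, ← mul_assoc]
    exact Nat.mul_lt_mul_of_pos_right (by omega) (pow_pos hp.pos _)
  obtain ⟨x, hx, hxQ, hxb⟩ := exists_unit_solution_le hp hp2 (n := n) (m := m) (e := e)
    (by omega) (by omega) (by omega) (by omega) (by omega) hcount hα₁ hα₂ hα₃ ha hQ
  refine ⟨x 0, x 1, x 2, hx, hxQ, ?_⟩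
  have hmax : max (max |x 0| |x 1|) |x 2| ≤ 2 * (p : ℤ) ^ (n - m + 1 + 2 * e) :=
    max_le (max_le (hxb 0) (hxb 1)) (hxb 2)
  have hmax' : ((max (max |x 0| |x 1|) |x 2| : ℤ) : ℝ) ≤ 2 * (p : ℝ) ^ (n - m + 1 + 2 * e) := by
    exact_mod_cast hmax
  refine hmax'.trans ?_
  have hexp : ((n - m + 2 * e : ℕ) : ℝ) ≤ n * ((11 : ℝ) / 18 + ε) := by
    have h18 : 18 * (n - m + 2 * e) ≤ 11 * n := by omega
    have h18' : (18 : ℝ) * ((n - m + 2 * e : ℕ) : ℝ) ≤ 11 * n := by exact_mod_cast h18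
    have : 0 ≤ (n : ℝ) * ε := by positivity
    linarith
  calc 2 * (p : ℝ) ^ (n - m + 1 + 2 * e) = 2 * p * (p : ℝ) ^ (n - m + 2 * e) := by ring
    _ ≤ 2 * p * ((p : ℝ) ^ n) ^ ((11 : ℝ) / 18 + ε) := by
      refine mul_le_mul_of_nonneg_left ?_ (by positivity)
      rw [← Real.rpow_natCast, ← Real.rpow_natCast, ← Real.rpow_mul hp0.le]
      exact Real.rpow_le_rpow_of_exponent_le (by exact_mod_cast hp.one_le) hexp
end

section
/- For every ε > 0 there exists a constant C(ε) > 0 such that for all nonzero integers A, B, C and every real number x ≥ 1, the number of pairs (X,Y) ∈ ℤ² with max(|X|,|Y|) ≤ x and AX² + BY² = C is at most C(ε) · (|A·B·C|·x)^ε. -/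
/-- The divisor bound: `d(n) ≪_ε n ^ ε`. -/
theorem exists_card_divisors_le_rpow (ε : ℝ) (hε : 0 < ε) :
    ∃ c : ℝ, 0 < c ∧ ∀ n : ℕ, n ≠ 0 → (n.divisors.card : ℝ) ≤ c * (n : ℝ) ^ ε := by
  have hlog : 0 < Real.log 2 := Real.log_pos (by norm_num)
  obtain ⟨P, hP⟩ := exists_nat_ge ((2 : ℝ) ^ (1 / ε))
  set c : ℝ := 1 + 1 / (ε * Real.log 2) with hc
  have hc1 : 1 ≤ c := by
    have : 0 < 1 / (ε * Real.log 2) := by positivity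
    linarith
  refine ⟨c ^ P, by positivity, fun n hn ↦ ?_⟩
  have hlarge (p k : ℕ) (hp : P ≤ p) : (k + 1 : ℝ) ≤ ((p : ℝ) ^ k) ^ ε := by
    have hp2 : (2 : ℝ) ≤ (p : ℝ) ^ ε := by
      calc (2 : ℝ) = ((2 : ℝ) ^ (1 / ε)) ^ ε := by
            rw [← Real.rpow_mul (by norm_num), one_div_mul_cancel hε.ne', Real.rpow_one]
        _ ≤ (p : ℝ) ^ ε := by
            gcongr
            exact hP.trans (by exact_mod_cast hp)
    calc (k + 1 : ℝ) ≤ 2 ^ k := by exact_mod_cast Nat.lt_two_pow_self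
      _ ≤ ((p : ℝ) ^ ε) ^ k := by gcongr
      _ = ((p : ℝ) ^ k) ^ ε := by
        rw [← Real.rpow_natCast, ← Real.rpow_natCast, ← Real.rpow_mul (by positivity),
          ← Real.rpow_mul (by positivity), mul_comm]
  have hsmall (p k : ℕ) (hp : 2 ≤ p) : (k + 1 : ℝ) ≤ c * ((p : ℝ) ^ k) ^ ε := by
    have h1 : 1 + k * (ε * Real.log 2) ≤ ((p : ℝ) ^ k) ^ ε := by
      calc 1 + k * (ε * Real.log 2) ≤ Real.exp (k * (ε * Real.log 2)) := by
            linarith [Real.add_one_le_exp (k * (ε * Real.log 2))]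
        _ = ((2 : ℝ) ^ k) ^ ε := by
            rw [Real.rpow_def_of_pos (by positivity), Real.log_pow]; ring_nf
        _ ≤ ((p : ℝ) ^ k) ^ ε := by
            gcongr
            exact_mod_cast hp
    refine le_trans ?_ (mul_le_mul_of_nonneg_left h1 (by positivity))
    rw [hc]
    have h2 : (0 : ℝ) ≤ 1 / (ε * Real.log 2) + k * (ε * Real.log 2) := by positivity
    have h3 : 1 / (ε * Real.log 2) * (k * (ε * Real.log 2)) = k := by field_simp
    nlinarith
  rw [Nat.card_divisors hn]
  push_cast
  calc ∏ p ∈ n.primeFactors, ((n.factorization p : ℝ) + 1)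
      ≤ ∏ p ∈ n.primeFactors,
          ((if p < P then c else 1) * ((p : ℝ) ^ n.factorization p) ^ ε) := by
        refine Finset.prod_le_prod (fun p _ ↦ by positivity) fun p hp ↦ ?_
        split_ifs with h
        · exact hsmall p _ (Nat.prime_of_mem_primeFactors hp).two_le
        · rw [one_mul]; exact hlarge p _ (not_lt.mp h)
    _ = c ^ (n.primeFactors.filter (· < P)).card * (n : ℝ) ^ ε := by
        rw [Finset.prod_mul_distrib, ← Finset.prod_filter, Finset.prod_const,
          Real.finsetProd_rpow _ _ (fun p _ ↦ by positivity)]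
        congr 2
        conv_rhs => rw [← Nat.prod_factorization_pow_eq_self hn]
        rw [Nat.prod_factorization_eq_prod_primeFactors]
        push_cast
        rfl
    _ ≤ c ^ P * (n : ℝ) ^ ε := by
        gcongr
        calc _ ≤ (Finset.range P).card := Finset.card_le_card fun p hp ↦ by
              simpa using (Finset.mem_filter.mp hp).2
          _ = P := Finset.card_range P

/-- Positive solutions of `p ^ 2 - D * q ^ 2 = 4` with `D > 0` grow geometrically. -/
theorem five_mul_le_four_mul_of_pell_four {D p q p' q' : ℤ} (hD : 0 < D) (hp : 0 < p) (hq : 0 < q)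
    (hp' : 0 < p') (hpq : p ^ 2 - D * q ^ 2 = 4) (hpq' : p' ^ 2 - D * q' ^ 2 = 4) (h : q < q') :
    5 * p ≤ 4 * p' := by
  have hq' : 0 < q' := hq.trans h
  have hQ : 0 < q' * p - p' * q := by
    have h1 : (q' * p - p' * q) * (q' * p + p' * q) = 4 * (q' ^ 2 - q ^ 2) := by
      linear_combination q' ^ 2 * hpq - q ^ 2 * hpq'
    refine pos_of_mul_pos_left (b := q' * p + p' * q) ?_ (by positivity)
    rw [h1]; nlinarith
  have hPQ : (p * p' - D * q * q') ^ 2 - D * (q' * p - p' * q) ^ 2 = 16 := by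
    linear_combination (p' ^ 2 - D * q' ^ 2) * hpq + 4 * hpq'
  have hP : 0 < p * p' - D * q * q' := by
    have : (D * q * q') ^ 2 < (p * p') ^ 2 := by
      have : (p * p') ^ 2 = (D * q ^ 2 + 4) * (D * q' ^ 2 + 4) := by
        linear_combination p' ^ 2 * hpq + (D * q ^ 2 + 4) * hpq'
      rw [this]; nlinarith [mul_pos hD (pow_pos hq 2), mul_pos hD (pow_pos hq' 2)]
    have := lt_of_pow_lt_pow_left₀ 2 (by positivity) this
    linarith
  have hP5 : 5 ≤ p * p' - D * q * q' := by
    have : 0 < D * (q' * p - p' * q) ^ 2 := by positivity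
    nlinarith
  have h4 : 4 * p' = (p * p' - D * q * q') * p + D * (q' * p - p' * q) * q := by
    linear_combination - p' * hpq
  have : 0 < D * (q' * p - p' * q) * q := by positivity
  nlinarith

/-- The equation `p ^ 2 - D * q ^ 2 = 4` has few solutions in a box, uniformly in `D`. -/
theorem card_pell_four_le {D : ℤ} (hD : D ≠ 0) (K : ℕ) (T : Finset (ℤ × ℤ))
    (hT : ∀ z ∈ T, z.1 ^ 2 - D * z.2 ^ 2 = 4 ∧ |z.1| ≤ K) :
    T.card ≤ 25 * (⌊Real.log K / Real.log (5 / 4)⌋₊ + 1) := by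
  rcases lt_or_gt_of_ne hD with hneg | hpos
  · have hsub : T ⊆ Finset.Icc (-2) 2 ×ˢ Finset.Icc (-2) 2 := by
      intro z hz
      have h := (hT z hz).1
      have h1 : z.1 ^ 2 ≤ 2 ^ 2 := by nlinarith [sq_nonneg z.2]
      have h2 : z.2 ^ 2 ≤ 2 ^ 2 := by nlinarith [sq_nonneg z.2, sq_nonneg z.1]
      simp only [Finset.mem_product, Finset.mem_Icc]
      exact ⟨abs_le.mp (abs_le_of_sq_le_sq h1 (by norm_num)),
        abs_le.mp (abs_le_of_sq_le_sq h2 (by norm_num))⟩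
    refine (Finset.card_le_card hsub).trans ?_
    have : (Finset.Icc (-2 : ℤ) 2 ×ˢ Finset.Icc (-2 : ℤ) 2).card = 25 := rfl
    omega
  · have hlog : 0 < Real.log (5 / 4) := Real.log_pos (by norm_num)
    have hp0 (z) (hz : z ∈ T) : 1 ≤ |z.1| := by
      refine Int.one_le_abs fun h0 ↦ ?_
      have h := (hT z hz).1
      rw [h0] at h
      nlinarith [sq_nonneg z.2]
    let f (z : ℤ × ℤ) : SignType × SignType × ℕ :=
      (SignType.sign z.1, SignType.sign z.2, ⌊Real.log (|z.1| : ℤ) / Real.log (5 / 4)⌋₊)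
    have hmaps : ∀ z ∈ T, f z ∈ (Finset.univ : Finset SignType) ×ˢ (Finset.univ : Finset SignType)
        ×ˢ Finset.range (⌊Real.log K / Real.log (5 / 4)⌋₊ + 1) := by
      intro z hz
      simp only [f, Finset.mem_product, Finset.mem_univ, true_and, Finset.mem_range,
        Nat.lt_succ_iff]
      refine Nat.floor_le_floor ?_
      gcongr
      · exact_mod_cast hp0 z hz
      · exact_mod_cast (hT z hz).2
    -- solutions with the same label cannot have second coordinates of different size
    have hlt (z) (hz : z ∈ T) (w) (hw : w ∈ T) (hzw : f z = f w) : ¬ |z.2| < |w.2| := by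
      intro h
      have hz2 : 0 < |z.2| := by
        rw [abs_pos]
        intro h0
        have hs : SignType.sign z.2 = SignType.sign w.2 := congrArg (fun t ↦ t.2.1) hzw
        rw [h0, sign_zero, eq_comm, sign_eq_zero_iff] at hs
        rw [hs, h0] at h
        exact lt_irrefl _ h
      have hgap := five_mul_le_four_mul_of_pell_four hpos (hp0 z hz) hz2 (hp0 w hw)
        (by simpa using (hT z hz).1) (by simpa using (hT w hw).1) h
      have hfl : ⌊Real.log (|z.1| : ℤ) / Real.log (5 / 4)⌋₊ =
        ⌊Real.log (|w.1| : ℤ) / Real.log (5 / 4)⌋₊ := congrArg (fun t ↦ t.2.2) hzw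
      have hz1 : (0 : ℝ) < (|z.1| : ℤ) := by exact_mod_cast hp0 z hz
      have hz1' : (1 : ℝ) ≤ (|z.1| : ℤ) := by exact_mod_cast hp0 z hz
      have hR : Real.log (|z.1| : ℤ) / Real.log (5 / 4) + 1 ≤
          Real.log (|w.1| : ℤ) / Real.log (5 / 4) := by
        rw [div_add_one hlog.ne', ← Real.log_mul hz1.ne' (by norm_num)]
        gcongr
        have : (5 : ℝ) * (|z.1| : ℤ) ≤ 4 * (|w.1| : ℤ) := by exact_mod_cast hgap
        linarith
      have := Nat.floor_le_floor hR
      rw [Nat.floor_add_one (div_nonneg (Real.log_nonneg hz1') hlog.le)] at this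
      omega
    have hinj : Set.InjOn f T := by
      intro z hz w hw hzw
      have h2 : |z.2| = |w.2| := le_antisymm (not_lt.mp (hlt w hw z hz hzw.symm))
        (not_lt.mp (hlt z hz w hw hzw))
      have h1 : |z.1| = |w.1| := by
        rw [← sq_eq_sq_iff_abs_eq_abs]
        linear_combination (hT z hz).1 - (hT w hw).1 + D * (sq_eq_sq_iff_abs_eq_abs _ _).mpr h2
      have hs1 : SignType.sign z.1 = SignType.sign w.1 := congrArg (fun t ↦ t.1) hzw
      have hs2 : SignType.sign z.2 = SignType.sign w.2 := congrArg (fun t ↦ t.2.1) hzw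
      refine Prod.ext ?_ ?_
      · rw [← sign_mul_abs z.1, ← sign_mul_abs w.1, hs1, h1]
      · rw [← sign_mul_abs z.2, ← sign_mul_abs w.2, hs2, h2]
    refine (Finset.card_le_card_of_injOn f hmaps hinj).trans ?_
    simp only [Finset.card_product, Finset.card_range, Finset.card_univ]
    have : Fintype.card SignType = 3 := rfl
    rw [this]
    omega

theorem dvd_two_of_sq_dvd_four_mul {D h : ℤ} (hD : Squarefree D) (hh : h ^ 2 ∣ 4 * D) : h ∣ 2 := by
  have hg : 0 < Int.gcd h 2 := Int.gcd_pos_of_ne_zero_right _ (by norm_num)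
  obtain ⟨a, b, hab, ha, hb⟩ := Int.exists_gcd_one hg
  have hg0 : (Int.gcd h 2 : ℤ) ≠ 0 := by exact_mod_cast hg.ne'
  set g : ℤ := (Int.gcd h 2 : ℤ)
  have hcop : IsCoprime (a ^ 2) (b ^ 2) := (Int.isCoprime_iff_gcd_eq_one.mpr hab).pow
  have h1 : a ^ 2 ∣ b ^ 2 * D := by
    have h4 : (4 : ℤ) * D = g ^ 2 * (b ^ 2 * D) := by
      linear_combination (2 + b * g) * D * hb
    rw [h4, ha, mul_pow, mul_comm (a ^ 2)] at hh
    exact (mul_dvd_mul_iff_left (pow_ne_zero 2 hg0)).mp hh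
  have h2 : a ^ 2 ∣ D := hcop.dvd_of_dvd_mul_left h1
  have h3 : IsUnit a := hD a (by rwa [← sq])
  rw [ha]
  exact (h3.mul_left_dvd).mpr (Int.gcd_dvd_right ..)

theorem isCoprime_right_of_norm_eq {D n u y : ℤ} (hn : u ^ 2 - D * y ^ 2 = n)
    (huy : IsCoprime u y) : IsCoprime y n := by
  rw [← hn, show u ^ 2 - D * y ^ 2 = u ^ 2 + y * (-(D * y)) by ring]
  exact (huy.symm.pow_right (n := 2)).add_mul_left_right _

/-- Two primitive elements of norm `n` in `ℤ[√D]` which have the same position with respect to a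
third one have a quotient in `(1/2) ℤ[√D]`. -/
theorem dvd_two_mul_of_gcd_eq {D n u y u' y' a b : ℤ} (hD : Squarefree D) (hn0 : n ≠ 0)
    (hn : u ^ 2 - D * y ^ 2 = n) (huy : IsCoprime u y)
    (hn' : u' ^ 2 - D * y' ^ 2 = n)
    (hna : a ^ 2 - D * b ^ 2 = n) (hab : IsCoprime a b)
    (hgcd : Int.gcd (u * b - a * y) n = Int.gcd (u' * b - a * y') n) :
    n ∣ 2 * (u * y' - u' * y) := by
  have hy := isCoprime_right_of_norm_eq hn huy
  have hb := isCoprime_right_of_norm_eq hna hab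
  set d : ℤ := (Int.gcd (u * b - a * y) n : ℤ) with hd
  obtain ⟨e, he⟩ : d ∣ n := Int.gcd_dvd_right ..
  have hd0 : d ≠ 0 := fun h ↦ hn0 (by rw [he, h, zero_mul])
  -- the complementary divisor divides the conjugate combination
  have hconj (v z : ℤ) (hv : v ^ 2 - D * z ^ 2 = n) (hdv : d = Int.gcd (v * b - a * z) n) :
      e ∣ v * b + a * z := by
    have h1 : n ∣ (v * b - a * z) * (v * b + a * z) :=
      ⟨b ^ 2 - z ^ 2, by linear_combination b ^ 2 * hv - z ^ 2 * hna⟩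
    have hpos : 0 < Int.gcd (v * b - a * z) n := Int.gcd_pos_of_ne_zero_right _ hn0
    obtain ⟨r, s, hrs, hr, hs⟩ := Int.exists_gcd_one hpos
    rw [← hdv] at hr hs
    have hse : e = s := mul_left_cancel₀ hd0 (by rw [← he, hs, mul_comm])
    have h2 : s ∣ r * (v * b + a * z) := by
      rw [hs, hr, mul_comm s, mul_comm r, mul_assoc] at h1
      exact (mul_dvd_mul_iff_left hd0).mp h1
    rw [hse]
    exact (Int.isCoprime_iff_gcd_eq_one.mpr hrs).symm.dvd_of_dvd_mul_left h2
  have he1 : e ∣ u * b + a * y := hconj u y hn rfl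
  have he2 : e ∣ u' * b + a * y' := hconj u' y' hn' (by rw [hd, hgcd])
  have hd1 : d ∣ u * b - a * y := Int.gcd_dvd_left ..
  have hd2 : d ∣ u' * b - a * y' := by rw [hd, hgcd]; exact Int.gcd_dvd_left ..
  have hbd : IsCoprime d b := (hb.of_isCoprime_of_dvd_right ⟨e, he⟩).symm
  have hbe : IsCoprime e b := (hb.of_isCoprime_of_dvd_right ⟨d, by rw [he, mul_comm]⟩).symm
  have hdW : d ∣ u * y' - u' * y := by
    refine hbd.dvd_of_dvd_mul_left ?_
    convert (hd1.mul_right y').sub (hd2.mul_right y) using 1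
    ring
  have heW : e ∣ u * y' - u' * y := by
    refine hbe.dvd_of_dvd_mul_left ?_
    convert (he1.mul_right y').sub (he2.mul_right y) using 1
    ring
  obtain ⟨r, s, hrs, hr, hs⟩ := Int.exists_gcd_one (Int.gcd_pos_of_ne_zero_left e hd0)
  set h : ℤ := (Int.gcd d e : ℤ)
  have hhd : h ∣ d := Int.gcd_dvd_left ..
  have hhe : h ∣ e := Int.gcd_dvd_right ..
  have hhn : h ^ 2 ∣ n := by rw [sq, he]; exact mul_dvd_mul hhd hhe
  have h2u : h ∣ 2 * u := by
    refine (hbd.of_isCoprime_of_dvd_left hhd).dvd_of_dvd_mul_left ?_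
    convert (hhd.trans hd1).add (hhe.trans he1) using 1
    ring
  have h2 : h ∣ 2 := by
    refine dvd_two_of_sq_dvd_four_mul hD ?_
    have hcop : IsCoprime (h ^ 2) (y ^ 2) :=
      ((hy.of_isCoprime_of_dvd_right hhn).symm).pow_right
    refine hcop.dvd_of_dvd_mul_left ?_
    convert (pow_dvd_pow_of_dvd h2u 2).sub (hhn.mul_left 4) using 1
    linear_combination -4 * hn
  have hlcm : h * r * s ∣ u * y' - u' * y := by
    rw [hr] at hdW
    rw [hs] at heW
    obtain ⟨k, hk⟩ := hdW
    have hh0 : h ≠ 0 := fun h0 ↦ hd0 (by rw [hr, h0, mul_zero])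
    rw [hk, mul_comm r h, mul_assoc, mul_comm s h] at heW
    rw [hk, mul_comm r h]
    have : s ∣ r * k := (mul_dvd_mul_iff_left hh0).mp heW
    exact mul_dvd_mul_left _ ((Int.isCoprime_iff_gcd_eq_one.mpr hrs).symm.dvd_of_dvd_mul_left this)
  have : n = h * (h * r * s) := by rw [he, hr, hs]; ring
  rw [this]
  exact mul_dvd_mul h2 hlcm

/-- The primitive elements of `ℤ[√D]` of given norm in a box. -/
theorem card_primitive_norm_eq_le {D n : ℤ} (hD : Squarefree D) (hn0 : n ≠ 0) (M : ℕ)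
    (S : Finset (ℤ × ℤ)) (hS : ∀ z ∈ S, z.1 ^ 2 - D * z.2 ^ 2 = n ∧ IsCoprime z.1 z.2 ∧
      |z.1| ≤ M ∧ |z.2| ≤ M) :
    S.card ≤ 25 * (⌊Real.log ((2 * (1 + D.natAbs) * M ^ 2 : ℕ) : ℝ) / Real.log (5 / 4)⌋₊ + 1) *
      n.natAbs.divisors.card := by
  rcases S.eq_empty_or_nonempty with rfl | ⟨w, hw⟩
  · simp
  refine Finset.card_le_mul_card_image_of_maps_to
    (f := fun z ↦ Int.gcd (z.1 * w.2 - w.1 * z.2) n) ?_ _ ?_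
  · intro z _
    rw [Nat.mem_divisors]
    exact ⟨Nat.gcd_dvd_right .., by simpa using hn0⟩
  intro d _
  rcases (S.filter fun z ↦ Int.gcd (z.1 * w.2 - w.1 * z.2) n = d).eq_empty_or_nonempty
    with h | ⟨v, hv⟩
  · rw [h]; simp
  rw [Finset.mem_filter] at hv
  obtain ⟨hvn, -, hv1, hv2⟩ := hS v hv.1
  obtain ⟨hwn, hwc, -, -⟩ := hS w hw
  have key : ∀ z ∈ S.filter fun z ↦ Int.gcd (z.1 * w.2 - w.1 * z.2) n = d,
      n ∣ 2 * (z.1 * v.1 - D * z.2 * v.2) ∧ n ∣ 2 * (z.1 * v.2 - v.1 * z.2) := by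
    intro z hz
    rw [Finset.mem_filter] at hz
    obtain ⟨hzn, hzc, -, -⟩ := hS z hz.1
    have hW := dvd_two_mul_of_gcd_eq hD hn0 hzn hzc hvn hwn hwc (hz.2.trans hv.2.symm)
    refine ⟨?_, hW⟩
    obtain ⟨q, hq⟩ := hW
    refine (Int.pow_dvd_pow_iff two_ne_zero).mp ⟨4 + D * q ^ 2, ?_⟩
    linear_combination D * (2 * (z.1 * v.2 - v.1 * z.2) + n * q) * hq
      + 4 * (v.1 ^ 2 - D * v.2 ^ 2) * hzn + 4 * n * hvn
  let f (z : ℤ × ℤ) : ℤ × ℤ :=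
    (2 * (z.1 * v.1 - D * z.2 * v.2) / n, 2 * (z.1 * v.2 - v.1 * z.2) / n)
  rw [← Finset.card_image_of_injOn (f := f)]
  · refine card_pell_four_le hD.ne_zero _ _ ?_
    intro t ht
    obtain ⟨z, hz, rfl⟩ := Finset.mem_image.mp ht
    obtain ⟨⟨p, hp⟩, ⟨q, hq⟩⟩ := key z hz
    obtain ⟨hzn, -, hz1, hz2⟩ := hS z (Finset.mem_filter.mp hz).1
    simp only [f, hp, hq, Int.mul_ediv_cancel_left _ hn0]
    constructor
    · refine mul_left_cancel₀ (pow_ne_zero 2 hn0) ?_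
      linear_combination (-(2 * (z.1 * v.1 - D * z.2 * v.2) + n * p)) * hp
        + D * (2 * (z.1 * v.2 - v.1 * z.2) + n * q) * hq
        + 4 * (v.1 ^ 2 - D * v.2 ^ 2) * hzn + 4 * n * hvn
    · calc |p| ≤ |n| * |p| := le_mul_of_one_le_left (abs_nonneg _) (Int.one_le_abs hn0)
        _ = |2 * (z.1 * v.1 - D * z.2 * v.2)| := by rw [hp, abs_mul]
        _ = 2 * |z.1 * v.1 - D * z.2 * v.2| := by rw [abs_mul]; rfl
        _ ≤ 2 * (|z.1| * |v.1| + |D| * |z.2| * |v.2|) := by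
            rw [← abs_mul, ← abs_mul, ← abs_mul]
            gcongr
            exact abs_sub _ _
        _ ≤ 2 * (M * M + |D| * M * M) := by gcongr
        _ = _ := by push_cast; ring
  · intro z hz z' hz' h
    obtain ⟨h1, h2⟩ := Prod.mk.inj h
    have e1 := (Int.ediv_left_inj (key z hz).1 (key z' hz').1).mp h1
    have e2 := (Int.ediv_left_inj (key z hz).2 (key z' hz').2).mp h2
    have h2n : 2 * n ≠ 0 := by simpa using hn0
    refine Prod.ext (mul_left_cancel₀ h2n ?_) (mul_left_cancel₀ h2n ?_)
    · linear_combination v.1 * e1 - D * v.2 * e2 - 2 * (z.1 - z'.1) * hvn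
    · linear_combination v.2 * e1 - v.1 * e2 - 2 * (z.2 - z'.2) * hvn

/-- The elements of `ℤ[√D]` of given norm in a box. -/
theorem card_norm_eq_le {D N : ℤ} (hD : Squarefree D) (hN : N ≠ 0) (M : ℕ)
    (S : Finset (ℤ × ℤ)) (hS : ∀ z ∈ S, z.1 ^ 2 - D * z.2 ^ 2 = N ∧ |z.1| ≤ M ∧ |z.2| ≤ M) :
    S.card ≤ 25 * (⌊Real.log ((2 * (1 + D.natAbs) * M ^ 2 : ℕ) : ℝ) / Real.log (5 / 4)⌋₊ + 1) *
      N.natAbs.divisors.card * N.natAbs.divisors.card := by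
  have hsq (z) (hz : z ∈ S) : (Int.gcd z.1 z.2 : ℤ) ^ 2 ∣ N := by
    rw [← (hS z hz).1]
    exact (pow_dvd_pow_of_dvd (Int.gcd_dvd_left ..) 2).sub
      ((pow_dvd_pow_of_dvd (Int.gcd_dvd_right ..) 2).mul_left D)
  refine Finset.card_le_mul_card_image_of_maps_to (f := fun z ↦ Int.gcd z.1 z.2) ?_ _ ?_
  · intro z hz
    rw [Nat.mem_divisors]
    exact ⟨Int.natCast_dvd.mp ((dvd_pow_self _ two_ne_zero).trans (hsq z hz)), by simpa using hN⟩
  intro g _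
  rcases (S.filter fun z ↦ Int.gcd z.1 z.2 = g).eq_empty_or_nonempty with h | ⟨v, hv⟩
  · rw [h]; simp
  rw [Finset.mem_filter] at hv
  obtain ⟨n, hn⟩ := hsq v hv.1
  rw [hv.2] at hn
  have hg0 : (g : ℤ) ≠ 0 := fun h ↦ hN (by rw [hn, h]; ring)
  have hn0 : n ≠ 0 := fun h ↦ hN (by rw [hn, h, mul_zero])
  have key : ∀ z ∈ S.filter fun z ↦ Int.gcd z.1 z.2 = g,
      z.1 = g * (z.1 / g) ∧ z.2 = g * (z.2 / g) := by
    intro z hz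
    obtain ⟨-, hz⟩ := Finset.mem_filter.mp hz
    rw [← hz]
    exact ⟨(Int.mul_ediv_cancel' (Int.gcd_dvd_left ..)).symm,
      (Int.mul_ediv_cancel' (Int.gcd_dvd_right ..)).symm⟩
  have hdiv (a : ℤ) : |a| ≤ |g * a| := by
    rw [abs_mul]
    exact le_mul_of_one_le_left (abs_nonneg _) (Int.one_le_abs hg0)
  let f (z : ℤ × ℤ) : ℤ × ℤ := (z.1 / g, z.2 / g)
  rw [← Finset.card_image_of_injOn (f := f)]
  · refine (card_primitive_norm_eq_le hD hn0 M _ ?_).trans ?_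
    · intro t ht
      obtain ⟨z, hz, rfl⟩ := Finset.mem_image.mp ht
      obtain ⟨k1, k2⟩ := key z hz
      obtain ⟨hzS, hzg⟩ := Finset.mem_filter.mp hz
      obtain ⟨hzn, hz1, hz2⟩ := hS z hzS
      refine ⟨mul_left_cancel₀ (pow_ne_zero 2 hg0) ?_, ?_, ?_, ?_⟩
      · rw [← hn, ← hzn]
        conv_rhs => rw [k1, k2]
        ring
      · have : 0 < Int.gcd z.1 z.2 := by
          rw [hzg]
          exact Nat.pos_of_ne_zero (by simpa using hg0)
        have := Int.gcd_ediv_gcd_ediv_gcd this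
        rw [hzg] at this
        exact Int.isCoprime_iff_gcd_eq_one.mpr this
      · exact (hdiv _).trans (by rwa [← k1])
      · exact (hdiv _).trans (by rwa [← k2])
    · gcongr
      exact Int.natAbs_dvd_natAbs.mpr ⟨_, hn.trans (mul_comm _ _)⟩
  · intro z hz z' hz' h
    obtain ⟨h1, h2⟩ := Prod.mk.inj h
    obtain ⟨k1, k2⟩ := key z hz
    obtain ⟨k1', k2'⟩ := key z' hz'
    refine Prod.ext ?_ ?_
    · rw [k1, k1', h1]
    · rw [k2, k2', h2]

theorem exists_squarefree_mul_sq {k : ℤ} (hk : k ≠ 0) :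
    ∃ D m : ℤ, Squarefree D ∧ m ≠ 0 ∧ k = D * m ^ 2 := by
  obtain ⟨a, b, hab, ha⟩ := Nat.sq_mul_squarefree k.natAbs
  have hb : b ≠ 0 := by
    rintro rfl
    exact hk (by simpa using hab.symm)
  refine ⟨k.sign * a, b, ?_, by exact_mod_cast hb, ?_⟩
  · rw [← Int.squarefree_natAbs, Int.natAbs_mul, Int.natAbs_sign_of_ne_zero hk]
    simpa using ha
  · conv_lhs => rw [← Int.sign_mul_natAbs k, ← hab]
    push_cast
    ring

/-- The number of points on `A X² + B Y² = C` in a box, in terms of divisors and logarithms. -/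
theorem card_conic_le {A B C : ℤ} (hA : A ≠ 0) (hB : B ≠ 0) (hC : C ≠ 0) (M : ℕ)
    (S : Finset (ℤ × ℤ))
    (hS : ∀ z ∈ S, A * z.1 ^ 2 + B * z.2 ^ 2 = C ∧ |z.1| ≤ M ∧ |z.2| ≤ M) :
    S.card ≤ 25 * (⌊Real.log ((4 * ((A * B * C).natAbs * M) ^ 3 : ℕ) : ℝ) /
      Real.log (5 / 4)⌋₊ + 1) * (A * C).natAbs.divisors.card * (A * C).natAbs.divisors.card := by
  rcases S.eq_empty_or_nonempty with rfl | hne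
  · simp
  have hM : 1 ≤ M := by
    obtain ⟨z, hz⟩ := hne
    obtain ⟨h, h1, h2⟩ := hS z hz
    by_contra! h0
    have hM0 : M = 0 := by omega
    rw [hM0] at h1 h2
    have e1 : z.1 = 0 := abs_nonpos_iff.mp (by simpa using h1)
    have e2 : z.2 = 0 := abs_nonpos_iff.mp (by simpa using h2)
    exact hC (by rw [← h, e1, e2]; ring)
  obtain ⟨D, m, hD, hm, hDm⟩ := exists_squarefree_mul_sq (neg_ne_zero.mpr (mul_ne_zero hA hB))
  have hAB : (A * B).natAbs = D.natAbs * m.natAbs ^ 2 := by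
    rw [← Int.natAbs_neg, hDm, Int.natAbs_mul, Int.natAbs_pow]
  have hA1 : 1 ≤ A.natAbs := Int.natAbs_pos.mpr hA
  have hB1 : 1 ≤ B.natAbs := Int.natAbs_pos.mpr hB
  have hC1 : 1 ≤ C.natAbs := Int.natAbs_pos.mpr hC
  have hD1 : 1 ≤ D.natAbs := Int.natAbs_pos.mpr hD.ne_zero
  have hm1 : 1 ≤ m.natAbs := Int.natAbs_pos.mpr hm
  have hmAB : m.natAbs ≤ (A * B).natAbs := by rw [hAB]; nlinarith
  have hDAB : D.natAbs ≤ (A * B).natAbs := by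
    rw [hAB]; exact Nat.le_mul_of_pos_right _ (by positivity)
  have hAAB : A.natAbs ≤ (A * B).natAbs := by
    rw [Int.natAbs_mul]; exact Nat.le_mul_of_pos_right _ hB1
  have hbox (c t : ℤ) (hc : c.natAbs ≤ (A * B).natAbs) (ht : |t| ≤ M) :
      |c * t| ≤ ((A * B).natAbs * M : ℕ) := by
    rw [Int.abs_eq_natAbs] at ht ⊢
    rw [Int.natAbs_mul]
    exact_mod_cast Nat.mul_le_mul hc (by exact_mod_cast ht)
  let f (z : ℤ × ℤ) : ℤ × ℤ := (A * z.1, m * z.2)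
  have hf : Function.Injective f := fun z w h ↦ by
    obtain ⟨h1, h2⟩ := Prod.mk.inj h
    exact Prod.ext (mul_left_cancel₀ hA h1) (mul_left_cancel₀ hm h2)
  rw [← Finset.card_image_of_injective S hf]
  refine (card_norm_eq_le hD (mul_ne_zero hA hC) ((A * B).natAbs * M) _ ?_).trans ?_
  · intro t ht
    obtain ⟨z, hz, rfl⟩ := Finset.mem_image.mp ht
    obtain ⟨h, h1, h2⟩ := hS z hz
    refine ⟨?_, ?_, ?_⟩
    · linear_combination A * h + z.2 ^ 2 * hDm
    · exact hbox A z.1 hAAB h1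
    · exact hbox m z.2 hmAB h2
  · have hABC : (A * B).natAbs ≤ (A * B * C).natAbs := by
      rw [Int.natAbs_mul (A * B)]; exact Nat.le_mul_of_pos_right _ hC1
    have hAB1 : 1 ≤ (A * B).natAbs := hA1.trans hAAB
    have hH : (A * B).natAbs * M ≤ (A * B * C).natAbs * M := by gcongr
    have hDH : 1 + D.natAbs ≤ 2 * ((A * B * C).natAbs * M) := by
      have : D.natAbs ≤ (A * B * C).natAbs * M :=
        (hDAB.trans hABC).trans (Nat.le_mul_of_pos_right _ hM)
      omega
    have hK : 2 * (1 + D.natAbs) * ((A * B).natAbs * M) ^ 2 ≤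
        4 * ((A * B * C).natAbs * M) ^ 3 := by
      calc _ ≤ 2 * (2 * ((A * B * C).natAbs * M)) * ((A * B * C).natAbs * M) ^ 2 := by gcongr
        _ = _ := by ring
    have hpos : 0 < 2 * (1 + D.natAbs) * ((A * B).natAbs * M) ^ 2 := by positivity
    have hlog : 0 < Real.log (5 / 4) := Real.log_pos (by norm_num)
    gcongr

/-- For every `ε > 0` there is a constant `C(ε) > 0` such that for all
nonzero integers `A, B, C` and all reals `x ≥ 1`, the number of integer points `(X,Y)` with
`max(|X|,|Y|) ≤ x` on the conic `AX² + BY² = C` is at most `C(ε) · (|ABC|·x)^ε`. -/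
theorem count_points_on_conic (ε : ℝ) (hε : 0 < ε) :
    ∃ Cε : ℝ, 0 < Cε ∧ ∀ A B C : ℤ, A ≠ 0 → B ≠ 0 → C ≠ 0 → ∀ x : ℝ, 1 ≤ x →
      (Nat.card {XY : ℤ × ℤ | ((max |XY.1| |XY.2| : ℤ) : ℝ) ≤ x ∧
          A * XY.1 ^ 2 + B * XY.2 ^ 2 = C} : ℝ) ≤
        Cε * ((|A * B * C| : ℝ) * x) ^ ε := by
  set δ : ℝ := ε / 5 with hδ
  have hδ0 : 0 < δ := by positivity
  obtain ⟨c, hc, hdiv⟩ := exists_card_divisors_le_rpow δ hδ0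
  have hl : 0 < Real.log (5 / 4) := Real.log_pos (by norm_num)
  set l : ℝ := Real.log (5 / 4)
  refine ⟨25 * ((1 / (δ * l) + 1) * 4 ^ δ) * c * c, by positivity, ?_⟩
  intro A B C hA hB hC x hx
  set M : ℕ := ⌊x⌋₊
  have hM1 : 1 ≤ M := Nat.le_floor (by exact_mod_cast hx)
  have hMx : (M : ℝ) ≤ x := Nat.floor_le (by linarith)
  have habs : ((A * B * C).natAbs : ℝ) = |(A * B * C : ℝ)| := by
    rw [Nat.cast_natAbs]; push_cast; rfl
  set H : ℝ := |(A * B * C : ℝ)| * x with hH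
  have hABC1 : 1 ≤ (A * B * C).natAbs :=
    Int.natAbs_pos.mpr (mul_ne_zero (mul_ne_zero hA hB) hC)
  have hHn : ((A * B * C).natAbs : ℝ) * M ≤ H := by rw [hH, ← habs]; gcongr
  have hABCH : ((A * B * C).natAbs : ℝ) ≤ H := by
    rw [hH, ← habs]; exact le_mul_of_one_le_right (by positivity) hx
  have hH1 : 1 ≤ H := le_trans (by exact_mod_cast hABC1) hABCH
  have hbox {t : ℤ} (ht : (|t| : ℝ) ≤ x) : |t| ≤ M := by
    rw [Int.abs_eq_natAbs]
    have : t.natAbs ≤ M := Nat.le_floor (by rw [Nat.cast_natAbs]; exact_mod_cast ht)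
    exact_mod_cast this
  have hmem {z : ℤ × ℤ} (hz : z ∈ {XY : ℤ × ℤ | ((max |XY.1| |XY.2| : ℤ) : ℝ) ≤ x ∧
      A * XY.1 ^ 2 + B * XY.2 ^ 2 = C}) :
      A * z.1 ^ 2 + B * z.2 ^ 2 = C ∧ |z.1| ≤ M ∧ |z.2| ≤ M := by
    obtain ⟨h1, h2⟩ := hz
    push_cast at h1
    exact ⟨h2, hbox ((le_max_left _ _).trans h1), hbox ((le_max_right _ _).trans h1)⟩
  have hfin : {XY : ℤ × ℤ | ((max |XY.1| |XY.2| : ℤ) : ℝ) ≤ x ∧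
      A * XY.1 ^ 2 + B * XY.2 ^ 2 = C}.Finite := by
    refine (Set.finite_Icc ((-M, -M) : ℤ × ℤ) (M, M)).subset fun z hz ↦ ?_
    obtain ⟨-, h1, h2⟩ := hmem hz
    rw [abs_le] at h1 h2
    exact ⟨⟨h1.1, h2.1⟩, ⟨h1.2, h2.2⟩⟩
  have hcount := card_conic_le hA hB hC M hfin.toFinset
    fun z hz ↦ hmem (hfin.mem_toFinset.mp hz)
  have hd : ((A * C).natAbs.divisors.card : ℝ) ≤ c * H ^ δ := by
    refine (hdiv _ (Int.natAbs_ne_zero.mpr (mul_ne_zero hA hC))).trans ?_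
    gcongr
    refine le_trans ?_ hABCH
    have : (A * C).natAbs ≤ (A * B * C).natAbs := by
      rw [mul_right_comm, Int.natAbs_mul (A * C)]
      exact Nat.le_mul_of_pos_right _ (Int.natAbs_pos.mpr hB)
    exact_mod_cast this
  have hK : (1 : ℝ) ≤ ((4 * ((A * B * C).natAbs * M) ^ 3 : ℕ) : ℝ) := by
    exact_mod_cast (show 0 < 4 * ((A * B * C).natAbs * M) ^ 3 by positivity)
  have hKH : ((4 * ((A * B * C).natAbs * M) ^ 3 : ℕ) : ℝ) ≤ 4 * H ^ 3 := by
    push_cast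
    gcongr
  set K : ℝ := ((4 * ((A * B * C).natAbs * M) ^ 3 : ℕ) : ℝ)
  have hfloor : (⌊Real.log K / l⌋₊ + 1 : ℝ) ≤ (1 / (δ * l) + 1) * 4 ^ δ * H ^ (3 * δ) := by
    calc (⌊Real.log K / l⌋₊ + 1 : ℝ) ≤ Real.log K / l + 1 := by
          gcongr
          exact Nat.floor_le (div_nonneg (Real.log_nonneg hK) hl.le)
      _ ≤ K ^ δ / δ / l + K ^ δ := by
          gcongr
          · exact Real.log_le_rpow_div (by linarith) hδ0
          · exact Real.one_le_rpow hK hδ0.le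
      _ = (1 / (δ * l) + 1) * K ^ δ := by field_simp
      _ ≤ (1 / (δ * l) + 1) * (4 * H ^ 3) ^ δ := by gcongr
      _ = (1 / (δ * l) + 1) * 4 ^ δ * H ^ (3 * δ) := by
          rw [Real.mul_rpow (by norm_num) (by positivity), ← Real.rpow_natCast,
            ← Real.rpow_mul (by positivity)]
          push_cast
          ring
  rw [Nat.card_coe_set_eq, Set.ncard_eq_toFinset_card _ hfin]
  calc (hfin.toFinset.card : ℝ)
      ≤ 25 * (⌊Real.log K / l⌋₊ + 1 : ℝ) * (A * C).natAbs.divisors.card *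
          (A * C).natAbs.divisors.card := by exact_mod_cast hcount
    _ ≤ 25 * ((1 / (δ * l) + 1) * 4 ^ δ * H ^ (3 * δ)) * (c * H ^ δ) * (c * H ^ δ) := by gcongr
    _ = 25 * ((1 / (δ * l) + 1) * 4 ^ δ) * c * c * (H ^ (3 * δ) * H ^ δ * H ^ δ) := by ring
    _ = 25 * ((1 / (δ * l) + 1) * 4 ^ δ) * c * c * H ^ ε := by
        rw [← Real.rpow_add (by positivity), ← Real.rpow_add (by positivity)]
        congr 2
        rw [hδ]
        ring
end

section
/- Let p be an odd prime and let α₁, α₂, α₃ be integers coprime to p. Then the number of triples (x₁,x₂,x₃) ∈ (ℤ/pℤ)³ with x₁x₂x₃ ≠ 0 and α₁x₁² + α₂x₂² + α₃x₃² = 0 in ℤ/pℤ equals (p−1)(p − s_p(α₁,α₂,α₃)). -/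
section FiniteField

open Finset

variable {F : Type*} [Field F] [Fintype F] [DecidableEq F]

/-- The number of nonzero solutions of `a * x ^ 2 = s`, as a combination of characters of `s`. -/
lemma card_ne_zero_mul_sq_eq (hF : ringChar F ≠ 2) {a : F} (ha : a ≠ 0) (s : F) :
    (#{x : F | x ≠ 0 ∧ a * x ^ 2 = s} : ℤ) =
      (1 : MulChar F ℤ) s + quadraticChar F a * quadraticChar F s := by
  rcases eq_or_ne s 0 with rfl | hs
  · have : ({x : F | x ≠ 0 ∧ a * x ^ 2 = 0} : Finset F) = ∅ := by
      ext x; simp [ha]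
    rw [this, MulChar.map_zero, MulChar.map_zero]
    simp
  · have hset : ({x : F | x ≠ 0 ∧ a * x ^ 2 = s} : Finset F) =
        {x : F | x ^ 2 = a * s * (a⁻¹) ^ 2}.toFinset := by
      ext x
      simp only [mem_filter, mem_univ, true_and, Set.mem_toFinset, Set.mem_ofPred_eq]
      constructor
      · rintro ⟨-, rfl⟩
        field_simp
      · intro h
        have hx : a * x ^ 2 = s := by rw [h]; field_simp
        refine ⟨?_, hx⟩
        rintro rfl
        exact hs (by simpa using hx.symm)
    rw [hset, quadraticChar_card_sqrts hF, map_mul, map_mul,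
      quadraticChar_sq_one' (inv_ne_zero ha), MulChar.one_apply hs.isUnit]
    ring

/-- The number of points with nonzero coordinates on the conic `a * x ^ 2 + b * y ^ 2 = d`. -/
lemma card_ne_zero_conic (hF : ringChar F ≠ 2) {a b d : F} (ha : a ≠ 0) (hb : b ≠ 0)
    (hd : d ≠ 0) :
    (#{x : F × F | x.1 ≠ 0 ∧ x.2 ≠ 0 ∧ a * x.1 ^ 2 + b * x.2 ^ 2 = d} : ℤ) =
      Fintype.card F - 2 - quadraticChar F (a * d) - quadraticChar F (b * d)
        - quadraticChar F (-(a * b)) := by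
  set χ := quadraticChar F with hχ
  have hχ1 : χ ≠ 1 := quadraticChar_ne_one hF
  have hχχ : jacobiSum χ χ = -χ (-1) := by
    have hinv : χ⁻¹ = χ := (quadraticChar_isQuadratic F).inv
    simpa only [hinv] using jacobiSum_nontrivial_inv hχ1
  have hdd : χ d * χ d = 1 := by rw [← sq]; exact quadraticChar_sq_one hd
  have hfib : ∀ s : F,
      #{x ∈ ({x : F × F | x.1 ≠ 0 ∧ x.2 ≠ 0 ∧ a * x.1 ^ 2 + b * x.2 ^ 2 = d} : Finset (F × F)) |
          a * x.1 ^ 2 / d = s} =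
        #{x : F | x ≠ 0 ∧ a * x ^ 2 = d * s} * #{y : F | y ≠ 0 ∧ b * y ^ 2 = d * (1 - s)} := by
    intro s
    rw [← card_product]
    congr 1
    ext ⟨x, y⟩
    simp only [mem_filter, mem_univ, true_and, mem_product, div_eq_iff hd]
    constructor
    · rintro ⟨⟨hx, hy, h⟩, h'⟩
      exact ⟨⟨hx, by linear_combination h'⟩, hy, by linear_combination h - h'⟩
    · rintro ⟨⟨hx, h⟩, hy, h'⟩
      exact ⟨⟨hx, hy, by linear_combination h + h'⟩, by linear_combination h⟩
  have hone : ∀ s : F, (1 : MulChar F ℤ) (d * s) = (1 : MulChar F ℤ) s := fun s => by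
    rw [map_mul, MulChar.one_apply hd.isUnit, one_mul]
  rw [card_eq_sum_card_fiberwise (t := univ) (f := fun x : F × F => a * x.1 ^ 2 / d)
    (fun _ _ => mem_coe.2 (mem_univ _))]
  simp only [hfib]
  push_cast
  simp only [card_ne_zero_mul_sq_eq hF ha, card_ne_zero_mul_sq_eq hF hb, hone, ← hχ]
  calc _ = jacobiSum (1 : MulChar F ℤ) 1 + χ b * χ d * jacobiSum 1 χ
        + χ a * χ d * jacobiSum χ 1 + χ a * χ b * (χ d * χ d) * jacobiSum χ χ := by
        simp only [jacobiSum, mul_sum, ← sum_add_distrib]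
        refine sum_congr rfl fun s _ => ?_
        simp only [map_mul]
        ring
    _ = _ := by
        rw [jacobiSum_comm χ 1, jacobiSum_one_nontrivial hχ1, jacobiSum_one_one, hχχ, hdd,
          neg_eq_neg_one_mul (a * b)]
        simp only [map_mul]
        ring

/-- The number of zeros with nonzero coordinates of a nondegenerate diagonal ternary quadratic
form over a finite field of odd characteristic. -/
lemma card_ne_zero_ternary (hF : ringChar F ≠ 2) {a b c : F} (ha : a ≠ 0) (hb : b ≠ 0)
    (hc : c ≠ 0) :
    (#{x : F × F × F | x.1 * x.2.1 * x.2.2 ≠ 0 ∧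
        a * x.1 ^ 2 + b * x.2.1 ^ 2 + c * x.2.2 ^ 2 = 0} : ℤ) =
      ((Fintype.card F : ℤ) - 1) * (Fintype.card F - (2 + quadraticChar F (-(a * b))
        + quadraticChar F (-(a * c)) + quadraticChar F (-(b * c)))) := by
  have hfib : ∀ z ∈ ({0}ᶜ : Finset F),
      (#{x ∈ ({x : F × F × F | x.1 * x.2.1 * x.2.2 ≠ 0 ∧
        a * x.1 ^ 2 + b * x.2.1 ^ 2 + c * x.2.2 ^ 2 = 0} : Finset (F × F × F)) |
          x.2.2 = z} : ℤ) = Fintype.card F - (2 + quadraticChar F (-(a * b))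
        + quadraticChar F (-(a * c)) + quadraticChar F (-(b * c))) := by
    intro z hz
    have hz : z ≠ 0 := by simpa using hz
    have hchar : ∀ e : F, quadraticChar F (e * -(c * z ^ 2)) = quadraticChar F (-(e * c)) := by
      intro e
      rw [show e * -(c * z ^ 2) = -(e * c) * z ^ 2 by ring, map_mul, quadraticChar_sq_one' hz,
        mul_one]
    have hcard : #{x ∈ ({x : F × F × F | x.1 * x.2.1 * x.2.2 ≠ 0 ∧
        a * x.1 ^ 2 + b * x.2.1 ^ 2 + c * x.2.2 ^ 2 = 0} : Finset (F × F × F)) | x.2.2 = z} =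
        #{x : F × F | x.1 ≠ 0 ∧ x.2 ≠ 0 ∧ a * x.1 ^ 2 + b * x.2 ^ 2 = -(c * z ^ 2)} := by
      refine card_nbij' (fun x => (x.1, x.2.1)) (fun x => (x.1, x.2, z)) ?_ ?_ ?_ ?_
      · rintro ⟨x, y, w⟩ h
        simp only [coe_filter, mem_filter, mem_univ, true_and, Set.mem_ofPred_eq, ne_eq,
          mul_eq_zero, not_or] at h ⊢
        obtain ⟨⟨⟨⟨hx, hy⟩, -⟩, h⟩, rfl⟩ := h
        exact ⟨hx, hy, by linear_combination h⟩
      · rintro ⟨x, y⟩ h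
        simp only [coe_filter, mem_filter, mem_univ, true_and, Set.mem_ofPred_eq, ne_eq,
          mul_eq_zero, not_or] at h ⊢
        exact ⟨⟨⟨⟨h.1, h.2.1⟩, hz⟩, by linear_combination h.2.2⟩, trivial⟩
      · rintro ⟨x, y, w⟩ h
        have : w = z := by simpa using (mem_filter.1 (mem_coe.1 h)).2
        simp [this]
      · intro x _
        rfl
    rw [hcard, card_ne_zero_conic hF ha hb (neg_ne_zero.2 (mul_ne_zero hc (pow_ne_zero 2 hz))),
      hchar, hchar]
    ring
  rw [card_eq_sum_card_fiberwise (t := {0}ᶜ) (f := fun x : F × F × F => x.2.2)]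
  · push_cast
    rw [sum_congr rfl hfib, sum_const, card_compl, card_singleton, nsmul_eq_mul,
      Nat.cast_sub Fintype.card_pos]
    simp
  · rintro ⟨x, y, z⟩ h
    have := right_ne_zero_of_mul (mem_filter.1 (mem_coe.1 h)).2.1
    simpa using this

end FiniteField

/-- For an odd prime `p` and `α₁, α₂, α₃` coprime to `p`, the number of
triples `(x₁,x₂,x₃) ∈ (ℤ/pℤ)³` with `x₁x₂x₃ ≠ 0` and `α₁x₁² + α₂x₂² + α₃x₃² = 0` equals
`(p-1)(p - s_p(α₁,α₂,α₃))`. -/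
theorem count_unit_solutions_mod_p (p : ℕ) [hp : Fact p.Prime] (hodd : Odd p)
    (α₁ α₂ α₃ : ℤ)
    (h1 : ¬ (p : ℤ) ∣ α₁) (h2 : ¬ (p : ℤ) ∣ α₂) (h3 : ¬ (p : ℤ) ∣ α₃) :
    (Nat.card {x : ZMod p × ZMod p × ZMod p |
        x.1 * x.2.1 * x.2.2 ≠ 0 ∧
        (α₁ : ZMod p) * x.1 ^ 2 + (α₂ : ZMod p) * x.2.1 ^ 2 +
          (α₃ : ZMod p) * x.2.2 ^ 2 = 0} : ℤ) =
      ((p : ℤ) - 1) * ((p : ℤ) - (2 + legendreSym p (-(α₁ * α₂))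
        + legendreSym p (-(α₁ * α₃)) + legendreSym p (-(α₂ * α₃)))) := by
  have hF : ringChar (ZMod p) ≠ 2 := by
    rw [ZMod.ringChar_zmod_n]
    rintro rfl
    exact absurd hodd (by decide)
  have hne : ∀ {α : ℤ}, ¬ (p : ℤ) ∣ α → (α : ZMod p) ≠ 0 := fun h h0 =>
    h ((ZMod.intCast_zmod_eq_zero_iff_dvd _ p).1 h0)
  have h := card_ne_zero_ternary hF (hne h1) (hne h2) (hne h3)
  rw [ZMod.card] at h
  simp only [legendreSym, Int.cast_neg, Int.cast_mul]
  rw [← h]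
  exact congrArg Nat.cast (Nat.subtype_card _ (by simp))
end

section
/- Let p be an odd prime, n ≥ 1 an integer, and α₁, α₂, α₃ integers coprime to p such that −α₂α₃ is a quadratic residue modulo p. Then the number of pairs (y₁,y₂) ∈ (ℤ/pⁿℤ)² with y₁ and y₂ units and α₁y₁² + α₂y₂² + α₃ = 0 in ℤ/pⁿℤ equals p^{n−1}(p − s_p(α₁,α₂,α₃)). -/
/-- If `-bc = e²` with `e` a unit, the unit points of the conic `ax² + by² + c = 0` are
parametrized by `u = (by - e)/x`. -/
lemma card_unit_points_conic {R : Type*} [CommRing R] {a b c e : R} (ha : IsUnit a)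
    (hb : IsUnit b) (he : IsUnit e) (h2 : IsUnit (2 : R)) (hec : e ^ 2 = -(b * c)) :
    Nat.card {y : R × R | IsUnit y.1 ∧ IsUnit y.2 ∧ a * y.1 ^ 2 + b * y.2 ^ 2 + c = 0} =
      Nat.card {u : R | IsUnit u ∧ IsUnit (u ^ 2 + a * b) ∧ IsUnit (u ^ 2 - a * b)} := by
  obtain ⟨b', hb'⟩ := hb.exists_right_inv
  have hb'u : IsUnit b' := IsUnit.of_mul_eq_one_right b hb'
  symm
  refine Nat.card_congr (Set.BijOn.equiv (fun u : R =>
    (-(2 * e * u * Ring.inverse (u ^ 2 + a * b)),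
      b' * e * -(u ^ 2 - a * b) * Ring.inverse (u ^ 2 + a * b))) ⟨?_, ?_, ?_⟩)
  · rintro u ⟨hu, hp, hm⟩
    have hw := Ring.mul_inverse_cancel _ hp
    have hwu : IsUnit (Ring.inverse (u ^ 2 + a * b)) := IsUnit.of_mul_eq_one_right _ hw
    refine ⟨(((h2.mul he).mul hu).mul hwu).neg, ((hb'u.mul he).mul hm.neg).mul hwu, ?_⟩
    dsimp only
    generalize Ring.inverse (u ^ 2 + a * b) = w at hw
    apply hb.mul_left_cancel
    have hy : b * (b' * e * -(u ^ 2 - a * b) * w) = e * -(u ^ 2 - a * b) * w := by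
      linear_combination (e * -(u ^ 2 - a * b) * w) * hb'
    have hbc : b * c = -e ^ 2 := by rw [hec, neg_neg]
    calc b * (a * (-(2 * e * u * w)) ^ 2 + b * (b' * e * -(u ^ 2 - a * b) * w) ^ 2 + c)
        = a * b * (2 * e * u * w) ^ 2 + (b * (b' * e * -(u ^ 2 - a * b) * w)) ^ 2 + b * c := by
          ring
      _ = b * 0 := by
          rw [hy, hbc]
          linear_combination e ^ 2 * ((u ^ 2 + a * b) * w + 1) * hw
  · rintro u ⟨hu, hp, hm⟩ v ⟨hv, hp', hm'⟩ huv
    have key : ∀ t : R, IsUnit (t ^ 2 + a * b) →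
        b * (b' * e * -(t ^ 2 - a * b) * Ring.inverse (t ^ 2 + a * b)) - e =
          t * -(2 * e * t * Ring.inverse (t ^ 2 + a * b)) := by
      intro t ht
      have hw := Ring.mul_inverse_cancel _ ht
      generalize Ring.inverse (t ^ 2 + a * b) = w at hw
      linear_combination (e * -(t ^ 2 - a * b) * w) * hb' + e * hw
    have hxu : IsUnit (-(2 * e * u * Ring.inverse (u ^ 2 + a * b))) :=
      (((h2.mul he).mul hu).mul
        (IsUnit.of_mul_eq_one_right _ (Ring.mul_inverse_cancel _ hp))).neg
    obtain ⟨hx, hy⟩ := Prod.mk.inj huv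
    apply hxu.mul_right_cancel
    rw [← key u hp, hx, ← key v hp', hy]
  · rintro ⟨x, y⟩ ⟨hx, hy, hxy⟩
    dsimp only at hx hy hxy
    obtain ⟨x', hx'⟩ := hx.exists_right_inv
    have hx'u : IsUnit x' := IsUnit.of_mul_eq_one_right x hx'
    have hprod : (b * y - e) * (b * y + e) = -(a * b * x ^ 2) := by
      linear_combination b * hxy - hec
    have hmu : IsUnit (b * y - e) := isUnit_of_mul_isUnit_left
      (hprod ▸ ((ha.mul hb).mul (hx.pow 2)).neg)
    have hplus : ((b * y - e) * x') ^ 2 + a * b = -(2 * e * (b * y - e) * x' ^ 2) := by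
      linear_combination -(a * b * (x * x' + 1)) * hx' + x' ^ 2 * hprod
    have hminus : ((b * y - e) * x') ^ 2 - a * b = 2 * (b * y) * (b * y - e) * x' ^ 2 := by
      linear_combination (a * b * (x * x' + 1)) * hx' - x' ^ 2 * hprod
    have hp : IsUnit (((b * y - e) * x') ^ 2 + a * b) :=
      hplus ▸ (((h2.mul he).mul hmu).mul (hx'u.pow 2)).neg
    have hm : IsUnit (((b * y - e) * x') ^ 2 - a * b) :=
      hminus ▸ ((h2.mul (hb.mul hy)).mul hmu).mul (hx'u.pow 2)
    refine ⟨(b * y - e) * x', ⟨hmu.mul hx'u, hp, hm⟩, ?_⟩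
    have hw := Ring.mul_inverse_cancel _ hp
    simp only
    generalize Ring.inverse (((b * y - e) * x') ^ 2 + a * b) = w at hw
    rw [hplus] at hw
    rw [hminus]
    refine Prod.ext ?_ ?_
    · linear_combination x * hw + 2 * e * (b * y - e) * x' * w * hx'
    · linear_combination y * hw - (2 * e * y * (b * y - e) * x' ^ 2 * w) * hb'

/-- An integer prime to `p` which is a square modulo the odd prime `p` is a square modulo `pⁿ`. -/
lemma ZMod.exists_sq_eq_of_legendreSym_eq_one {p : ℕ} [Fact p.Prime] (hp : p ≠ 2) (n : ℕ)
    {r : ℤ} (hr : legendreSym p r = 1) : ∃ e : ZMod (p ^ n), e ^ 2 = r := by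
  have hr0 : (r : ZMod p) ≠ 0 := by
    intro h
    simp [(legendreSym.eq_zero_iff p r).2 h] at hr
  obtain ⟨s, hs⟩ := (legendreSym.eq_one_iff p hr0).1 hr
  obtain ⟨s, rfl⟩ := ZMod.intCast_surjective s
  have hdvd : (p : ℤ) ∣ s ^ 2 - r := by
    rw [← ZMod.intCast_zmod_eq_zero_iff_dvd]
    push_cast
    rw [hs]
    ring
  have hs0 : ¬ (p : ℤ) ∣ 2 * s := by
    have h2 : (2 : ZMod p) ≠ 0 := Ring.two_ne_zero (by rwa [ZMod.ringChar_zmod_n])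
    rw [← ZMod.intCast_zmod_eq_zero_iff_dvd]
    push_cast
    refine mul_ne_zero h2 fun h => hr0 ?_
    rw [hs, h, mul_zero]
  have hderiv : ‖((2 * s : ℤ) : ℤ_[p])‖ = 1 :=
    le_antisymm (PadicInt.norm_le_one _)
      (not_lt.1 fun h => hs0 ((PadicInt.norm_int_lt_one_iff_dvd _).1 h))
  have hval : ‖((s ^ 2 - r : ℤ) : ℤ_[p])‖ < 1 := (PadicInt.norm_int_lt_one_iff_dvd _).2 hdvd
  have hens := hensels_lemma (p := p) (R := ℤ) (F := Polynomial.X ^ 2 - Polynomial.C r)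
    (a := (s : ℤ_[p])) (by
      have hF : (Polynomial.X ^ 2 - Polynomial.C r).derivative.aeval (s : ℤ_[p]) =
          ((2 * s : ℤ) : ℤ_[p]) := by
        simp [-Polynomial.map_ofNat, map_ofNat]
      rw [hF, hderiv]
      push_cast at hval
      simpa using hval)
  obtain ⟨z, hz, -⟩ := hens
  refine ⟨PadicInt.toZModPow n z, ?_⟩
  have : z ^ 2 = r := by simpa [sub_eq_zero] using hz
  rw [← map_pow, this, map_intCast]

lemma ZMod.isUnit_iff_castHom_ne_zero {p n : ℕ} [Fact p.Prime] (hn : n ≠ 0) (x : ZMod (p ^ n)) :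
    IsUnit x ↔ ZMod.castHom (dvd_pow_self p hn) (ZMod p) x ≠ 0 := by
  obtain ⟨x, rfl⟩ := ZMod.natCast_zmod_surjective x
  rw [map_natCast, ZMod.isUnit_iff_coprime, Ne, ZMod.natCast_eq_zero_iff]
  rw [Nat.coprime_pow_right_iff (Nat.pos_of_ne_zero hn), Nat.coprime_comm,
    (Fact.out : p.Prime).coprime_iff_not_dvd]

open Classical in
lemma ZMod.card_castHom_preimage {p n : ℕ} [Fact p.Prime] (hn : n ≠ 0) (S : Finset (ZMod p)) :
    Nat.card (ZMod.castHom (dvd_pow_self p hn) (ZMod p) ⁻¹' (S : Set (ZMod p))) =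
      p ^ (n - 1) * S.card := by
  set f := ZMod.castHom (dvd_pow_self p hn) (ZMod p)
  have hsurj : Function.Surjective f := ZMod.castHom_surjective _
  have hfib (T : Finset (ZMod p)) :
      (Finset.univ.filter fun x => f x ∈ T).card =
        T.card * (Finset.univ.filter fun x => f x = 0).card := by
    rw [Finset.card_eq_sum_card_fiberwise (f := f) (t := T) (fun x hx => by simpa using hx),
      Finset.sum_const_nat]
    intro t ht
    rw [Finset.filter_filter,
      show (Finset.univ.filter fun x => f x = 0).card = (Finset.univ.filter fun x => f x = t).card
        from AddMonoidHom.card_fiber_eq_of_mem_range f.toAddMonoidHom (hsurj 0) (hsurj t)]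
    congr 1
    ext x
    simp only [Finset.mem_filter, Finset.mem_univ, true_and]
    exact ⟨fun h => h.2, fun h => ⟨h ▸ ht, h⟩⟩
  have hker : (Finset.univ.filter fun x => f x = 0).card = p ^ (n - 1) := by
    have h := hfib Finset.univ
    simp only [Finset.mem_univ, Finset.filter_true, Finset.card_univ, ZMod.card] at h
    exact Nat.eq_of_mul_eq_mul_left (Fact.out : p.Prime).pos
      (h.symm.trans (mul_pow_sub_one hn p).symm)
  rw [mul_comm, ← hker, ← hfib, Nat.card_eq_fintype_card, Fintype.card_subtype]
  simp

/-- The number of nonzero residues `u` modulo `p` whose square is neither `t` nor `-t`. -/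
lemma ZMod.card_sq_ne {p : ℕ} [Fact p.Prime] (hp : p ≠ 2) {t : ℤ} (ht : (t : ZMod p) ≠ 0) :
    ((Finset.univ.filter fun u : ZMod p => u ≠ 0 ∧ u ^ 2 + t ≠ 0 ∧ u ^ 2 - t ≠ 0).card : ℤ) =
      p - (3 + legendreSym p (-t) + legendreSym p t) := by
  have h2 : (2 : ZMod p) ≠ 0 := Ring.two_ne_zero (by rwa [ZMod.ringChar_zmod_n])
  have hpos := legendreSym.card_sqrts p hp t
  have hneg := legendreSym.card_sqrts p hp (-t)
  set A := {x : ZMod p | x ^ 2 = (t : ℤ)}.toFinset with hA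
  set B := {x : ZMod p | x ^ 2 = ((-t : ℤ) : ZMod p)}.toFinset with hB
  have hAB : Disjoint A B := by
    rw [Finset.disjoint_left]
    intro x hx hy
    simp only [hA, hB, Set.mem_toFinset, Set.mem_ofPred_eq, Int.cast_neg] at hx hy
    have : (2 : ZMod p) * t = 0 := by linear_combination hy - hx
    exact (mul_ne_zero h2 ht) this
  have h0 : (0 : ZMod p) ∉ A ∪ B := by
    simp [hA, hB, ht, eq_comm]
  have hcompl : (Finset.univ.filter fun u : ZMod p => u ≠ 0 ∧ u ^ 2 + t ≠ 0 ∧ u ^ 2 - t ≠ 0) =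
      (insert 0 (A ∪ B))ᶜ := by
    ext u
    simp [hA, hB, sub_eq_zero, eq_neg_iff_add_eq_zero]
    tauto
  have hle := Finset.card_add_card_compl (insert 0 (A ∪ B))
  rw [← hcompl, Finset.card_insert_of_notMem h0, Finset.card_union_of_disjoint hAB,
    ZMod.card] at hle
  zify at hle
  linarith

/-- If `-α₂α₃` is a quadratic residue mod `p`, then the number of pairs
`(y₁,y₂)` of units of `ℤ/pⁿℤ` with `α₁y₁² + α₂y₂² + α₃ = 0` equals
`p^{n-1}(p - s_p(α₁,α₂,α₃))`. -/
theorem count_unit_solutions_mod_p_pow (p : ℕ) [hp : Fact p.Prime] (hodd : Odd p)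
    (n : ℕ) (hn : 1 ≤ n) (α₁ α₂ α₃ : ℤ)
    (h1 : ¬ (p : ℤ) ∣ α₁) (h2 : ¬ (p : ℤ) ∣ α₂) (h3 : ¬ (p : ℤ) ∣ α₃)
    (hQR : legendreSym p (-(α₂ * α₃)) = 1) :
    (Nat.card {y : ZMod (p ^ n) × ZMod (p ^ n) |
        IsUnit y.1 ∧ IsUnit y.2 ∧
        (α₁ : ZMod (p ^ n)) * y.1 ^ 2 + (α₂ : ZMod (p ^ n)) * y.2 ^ 2 +
          (α₃ : ZMod (p ^ n)) = 0} : ℤ) =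
      (p : ℤ) ^ (n - 1) * ((p : ℤ) - (2 + legendreSym p (-(α₁ * α₂))
        + legendreSym p (-(α₁ * α₃)) + legendreSym p (-(α₂ * α₃)))) := by
  have hn0 : n ≠ 0 := Nat.one_le_iff_ne_zero.1 hn
  have hp2 : p ≠ 2 := by
    rintro rfl
    exact absurd hodd (by decide)
  have h1' : (α₁ : ZMod p) ≠ 0 := mt (ZMod.intCast_zmod_eq_zero_iff_dvd _ _).1 h1
  have h2' : (α₂ : ZMod p) ≠ 0 := mt (ZMod.intCast_zmod_eq_zero_iff_dvd _ _).1 h2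
  have h3' : (α₃ : ZMod p) ≠ 0 := mt (ZMod.intCast_zmod_eq_zero_iff_dvd _ _).1 h3
  have hunit (m : ℤ) (hm : (m : ZMod p) ≠ 0) : IsUnit (m : ZMod (p ^ n)) := by
    rwa [ZMod.isUnit_iff_castHom_ne_zero hn0, map_intCast]
  have htwo : IsUnit (2 : ZMod (p ^ n)) := by
    exact_mod_cast hunit 2 (by
      exact_mod_cast Ring.two_ne_zero (by rwa [ZMod.ringChar_zmod_n] : ringChar (ZMod p) ≠ 2))
  obtain ⟨e, he⟩ := ZMod.exists_sq_eq_of_legendreSym_eq_one hp2 n hQR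
  have heu : IsUnit e := by
    rw [← isUnit_pow_iff two_ne_zero, he]
    exact hunit _ (by push_cast; exact neg_ne_zero.2 (mul_ne_zero h2' h3'))
  have hset : {u : ZMod (p ^ n) | IsUnit u ∧ IsUnit (u ^ 2 + (α₁ : ZMod (p ^ n)) * α₂) ∧
      IsUnit (u ^ 2 - (α₁ : ZMod (p ^ n)) * α₂)} =
      ZMod.castHom (dvd_pow_self p hn0) (ZMod p) ⁻¹' ((Finset.univ.filter fun u : ZMod p =>
        u ≠ 0 ∧ u ^ 2 + ((α₁ * α₂ : ℤ) : ZMod p) ≠ 0 ∧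
          u ^ 2 - ((α₁ * α₂ : ℤ) : ZMod p) ≠ 0 : Finset (ZMod p)) : Set (ZMod p)) := by
    ext u
    simp only [Set.mem_ofPred_eq, Set.mem_preimage, Finset.coe_filter, Finset.mem_univ, true_and,
      ZMod.isUnit_iff_castHom_ne_zero hn0, map_add, map_sub, map_pow, map_mul, map_intCast,
      Int.cast_mul]
  have hleg : legendreSym p (α₁ * α₂) = legendreSym p (-(α₁ * α₃)) := by
    have h : legendreSym p (α₁ * α₂) * legendreSym p (-(α₁ * α₃)) = 1 := by
      rw [← legendreSym.mul, show α₁ * α₂ * -(α₁ * α₃) = α₁ ^ 2 * -(α₂ * α₃) by ring,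
        legendreSym.mul, hQR, legendreSym.sq_one' p h1', mul_one]
    exact Int.eq_of_mul_eq_one h
  rw [card_unit_points_conic (hunit _ h1') (hunit _ h2') heu htwo (by rw [he]; push_cast; rfl),
    hset, ZMod.card_castHom_preimage hn0, Nat.cast_mul, Nat.cast_pow,
    ZMod.card_sq_ne hp2 (by push_cast; exact mul_ne_zero h1' h2'), hleg, hQR]
  ring
end
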